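/- arXiv:2409.14994 — 3 statements merged into one kernel-verified Lean document; each statement's English description precedes it below -/
import Mathlib

section
/- Let c ∈ ℝ and let Ψ₁, Ψ₂ : ℝ → ℂ be measurable with Ψ₁ square integrable on ]−∞,c[ and Ψ₂ square integrable on ]c,∞[. Define the kernel R(x,y) := Ψ₁(min(x,y))·Ψ₂(max(x,y)). Then the following are equivalent: (i) there is C ≥ 0 such that |∫∫_{ℝ²} conj(f(x)) R(x,y) g(y) dx dy| ≤ C‖f‖_{L²}‖g‖_{L²} for all f, g ∈ L²(ℝ); (ii) there are C₁, C₂ ≥ 0 such that the same bound with constant C₁ holds for all f, g ∈ L²(ℝ) supported in ]−∞,c[, and with constant C₂ for all f, g ∈ L²(ℝ) supported in ]c,∞[. (The two off-diagonal pieces of R are automatically Hilbert–Schmidt.) -/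
open Set MeasureTheory

/-- product of two `L²` functions on a set is integrable there -/
lemma aux_intOn {s : Set ℝ} {u g : ℝ → ℂ} (hu : MemLp u 2 (volume.restrict s))
    (hg : MemLp g 2 (volume : Measure ℝ)) : IntegrableOn (fun y => u y * g y) s :=
  hu.integrable_mul (hg.restrict s)

lemma aux_cs {s : Set ℝ} {u g : ℝ → ℂ} (hu : MemLp u 2 (volume.restrict s))
    (hg : MemLp g 2 (volume : Measure ℝ)) :
    ‖∫ y in s, u y * g y‖ ≤ (eLpNorm u 2 (volume.restrict s)).toReal *
      (eLpNorm g 2 (volume : Measure ℝ)).toReal := by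
  have h1 : eLpNorm (fun y => u y * g y) 1 (volume.restrict s) ≤
      eLpNorm u 2 (volume.restrict s) * eLpNorm g 2 (volume.restrict s) := by
    have := eLpNorm_smul_le_mul_eLpNorm (p := 2) (q := 2) (r := 1)
      (hg.restrict s).aestronglyMeasurable hu.aestronglyMeasurable
    exact this
  have h2 : eLpNorm g 2 (volume.restrict s) ≤ eLpNorm g 2 (volume : Measure ℝ) :=
    eLpNorm_restrict_le _ _ _ _
  have h3 : ENNReal.ofReal ‖∫ y in s, u y * g y‖ ≤
      eLpNorm u 2 (volume.restrict s) * eLpNorm g 2 (volume : Measure ℝ) := by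
    refine le_trans ?_ (h1.trans (mul_le_mul_right h2 _))
    rw [eLpNorm_one_eq_lintegral_enorm, ofReal_norm]
    exact enorm_integral_le_lintegral_enorm _
  rw [← ENNReal.toReal_mul]
  exact (ENNReal.ofReal_le_iff_le_toReal (ENNReal.mul_ne_top hu.2.ne hg.2.ne)).1 h3

lemma aux_normsq {f : ℝ → ℂ} (hf : MemLp f 2 (volume : Measure ℝ)) :
    ∫ x, f x * (starRingEnd ℂ) (f x) =
      (((eLpNorm f 2 (volume : Measure ℝ)).toReal ^ 2 : ℝ) : ℂ) := by
  have h : ∀ x, f x * (starRingEnd ℂ) (f x) = ((‖f x‖ ^ 2 : ℝ) : ℂ) := by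
    intro x; rw [RCLike.mul_conj]; norm_cast
  simp_rw [h]
  rw [integral_complex_ofReal]
  congr 1
  rw [hf.eLpNorm_eq_integral_rpow_norm (by norm_num) (by norm_num)]
  have h0 : 0 ≤ ∫ x, ‖f x‖ ^ 2 := integral_nonneg fun x => by positivity
  simp only [ENNReal.toReal_ofNat, Real.rpow_ofNat]
  rw [ENNReal.toReal_ofReal (by positivity), ← Real.rpow_natCast, ← Real.rpow_mul h0]
  norm_num

lemma aux_conj {f : ℝ → ℂ} (hf : MemLp f 2 (volume : Measure ℝ)) :
    MemLp (fun x => (starRingEnd ℂ) (f x)) 2 (volume : Measure ℝ) := by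
  exact hf.star

lemma aux_conj_norm (f : ℝ → ℂ) :
    eLpNorm (fun x => (starRingEnd ℂ) (f x)) 2 (volume : Measure ℝ) = eLpNorm f 2 volume :=
  eLpNorm_congr_norm_ae (by simp)

/-- the testing argument -/
lemma aux_test {A B : Set ℝ} (hA : MeasurableSet A) (hB : MeasurableSet B)
    (hBf : volume B ≠ ⊤) {u v : ℝ → ℂ}
    (hvm : Measurable v) (hu : MemLp u 2 (volume.restrict A))
    (hne : ¬ (u =ᵐ[volume.restrict A] 0)) (R : ℝ → ℝ → ℂ)
    (hR : ∀ x ∈ A, ∀ y ∈ B, R x y = u x * v y) (C : ℝ) (hC0 : 0 ≤ C)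
    (hC : ∀ f g : ℝ → ℂ, MemLp f 2 (volume : Measure ℝ) →
        MemLp g 2 (volume : Measure ℝ) →
        Function.support f ⊆ A → Function.support g ⊆ B →
        ‖∫ x : ℝ, ∫ y : ℝ, (starRingEnd ℂ) (f x) * R x y * g y‖ ≤
          C * (eLpNorm f 2 (volume : Measure ℝ)).toReal *
            (eLpNorm g 2 (volume : Measure ℝ)).toReal) :
    MemLp v 2 (volume.restrict B) := by
  set f : ℝ → ℂ := A.indicator u with hf
  have hfL : MemLp f 2 volume := (memLp_indicator_iff_restrict hA).2 hu
  set a := (eLpNorm f 2 (volume : Measure ℝ)).toReal with ha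
  have ha0 : 0 < a := by
    refine ENNReal.toReal_pos ?_ hfL.2.ne
    rw [hf, eLpNorm_indicator_eq_eLpNorm_restrict hA]
    rwa [Ne, eLpNorm_eq_zero_iff hu.1 (by norm_num)]
  -- truncations
  let S : ℕ → Set ℝ := fun n => B ∩ {y | ‖v y‖ ≤ n}
  have hS : ∀ n, MeasurableSet (S n) := fun n =>
    hB.inter (measurableSet_le hvm.norm measurable_const)
  let w : ℕ → ℝ → ℂ := fun n => (S n).indicator v
  have hwL : ∀ n, MemLp (w n) 2 volume := by
    intro n
    refine (memLp_indicator_iff_restrict (hS n)).2 ?_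
    have : IsFiniteMeasure (volume.restrict (S n)) :=
      ⟨by simpa using lt_of_le_of_lt (measure_mono inter_subset_left) hBf.lt_top⟩
    refine MemLp.of_bound hvm.aestronglyMeasurable n ?_
    filter_upwards [ae_restrict_mem (hS n)] with y hy using hy.2
  have hbd : ∀ n, (eLpNorm (w n) 2 volume).toReal ≤ C / a := by
    intro n
    set b := (eLpNorm (w n) 2 (volume : Measure ℝ)).toReal with hb
    have hb0 : 0 ≤ b := ENNReal.toReal_nonneg
    have key := hC f (fun y => (starRingEnd ℂ) (w n y)) hfL (aux_conj (hwL n))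
      (by simp [f])
      (by
        intro y hy
        by_contra hyB
        apply hy
        have : y ∉ S n := fun h => hyB h.1
        simp [w, this])
    have hint : ∀ x y, (starRingEnd ℂ) (f x) * R x y * (starRingEnd ℂ) (w n y) =
        (f x * (starRingEnd ℂ) (f x)) * (w n y * (starRingEnd ℂ) (w n y)) := by
      intro x y
      by_cases hx : x ∈ A
      · by_cases hy : y ∈ S n
        · simp only [f, w, indicator_of_mem hx, indicator_of_mem hy, hR x hx y hy.1]
          ring
        · simp [w, hy]
      · simp [f, hx]
    simp_rw [hint, integral_const_mul, integral_mul_const] at key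
    rw [aux_normsq hfL, aux_normsq (hwL n), aux_conj_norm, ← ha, ← hb, ← Complex.ofReal_mul,
      Complex.norm_real, Real.norm_of_nonneg (by positivity)] at key
    rw [le_div_iff₀ ha0]
    rcases hb0.eq_or_lt with h | h
    · rw [← h, zero_mul]; exact hC0
    · have : a * b * (b * a) ≤ a * b * C := by nlinarith
      exact le_of_mul_le_mul_left this (by positivity)
  refine ⟨hvm.aestronglyMeasurable, ?_⟩
  have hlim : ∀ᵐ y ∂(volume : Measure ℝ), Filter.Tendsto (fun n => w n y) Filter.atTop
      (nhds (B.indicator v y)) := by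
    refine Filter.Eventually.of_forall fun y => ?_
    refine tendsto_const_nhds.congr' ?_
    obtain ⟨N, hN⟩ := exists_nat_ge ‖v y‖
    filter_upwards [Filter.eventually_ge_atTop N] with n hn
    have hn' : ‖v y‖ ≤ n := hN.trans (by exact_mod_cast hn)
    by_cases hy : y ∈ B
    · have : y ∈ S n := ⟨hy, hn'⟩
      simp [w, hy, this]
    · have : y ∉ S n := fun h => hy h.1
      simp [w, hy, this]
  have hle := Lp.eLpNorm_lim_le_liminf_eLpNorm (p := 2) (fun n => (hwL n).1)
    (B.indicator v) hlim
  rw [← eLpNorm_indicator_eq_eLpNorm_restrict hB]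
  refine lt_of_le_of_lt hle (lt_of_le_of_lt ?_ (ENNReal.ofReal_lt_top (r := C / a)))
  refine Filter.liminf_le_of_le (by isBoundedDefault) ?_
  intro b hb
  obtain ⟨n, hn⟩ := hb.exists
  refine hn.trans ?_
  rw [← ENNReal.ofReal_toReal (hwL n).2.ne]
  exact ENNReal.ofReal_le_ofReal (hbd n)

lemma aux_nonzero_left (u : ℝ → ℂ) :
    ∀ᵐ x, u x ≠ 0 → ¬ (u =ᵐ[volume.restrict (Iio x)] 0) := by
  have h1 : ∀ᵐ x : ℝ, ∀ q : ℚ, (u =ᵐ[volume.restrict (Iio (q : ℝ))] 0) → x < q → u x = 0 := by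
    rw [ae_all_iff]
    intro q
    by_cases hq : u =ᵐ[volume.restrict (Iio (q : ℝ))] 0
    · filter_upwards [(ae_restrict_iff' measurableSet_Iio).1 hq] with x hx _ hxq using hx hxq
    · exact Filter.Eventually.of_forall fun x h => absurd h hq
  set T : Set ℝ := {x | (∀ q : ℚ, (u =ᵐ[volume.restrict (Iio (q : ℝ))] 0) → x < q → u x = 0) ∧
    u x ≠ 0 ∧ u =ᵐ[volume.restrict (Iio x)] 0} with hT
  have hlt : ∀ x ∈ T, ∀ y ∈ T, ¬ x < y := by
    intro x hx y hy hxy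
    obtain ⟨q, hxq, hqy⟩ := exists_rat_btwn hxy
    exact hx.2.1 (hx.1 q (ae_mono (Measure.restrict_mono (Iio_subset_Iio hqy.le) le_rfl) hy.2.2) hxq)
  have hsub : T.Subsingleton := fun x hx y hy =>
    le_antisymm (not_lt.1 (hlt y hy x hx)) (not_lt.1 (hlt x hx y hy))
  have h2 : ∀ᵐ x, x ∉ T := measure_eq_zero_iff_ae_notMem.1 (hsub.measure_zero volume)
  filter_upwards [h1, h2] with x hx1 hx2 hu hz
  exact hx2 ⟨hx1, hu, hz⟩

lemma aux_nonzero_right (u : ℝ → ℂ) :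
    ∀ᵐ x, u x ≠ 0 → ¬ (u =ᵐ[volume.restrict (Ioi x)] 0) := by
  have h1 : ∀ᵐ x : ℝ, ∀ q : ℚ, (u =ᵐ[volume.restrict (Ioi (q : ℝ))] 0) → q < x → u x = 0 := by
    rw [ae_all_iff]
    intro q
    by_cases hq : u =ᵐ[volume.restrict (Ioi (q : ℝ))] 0
    · filter_upwards [(ae_restrict_iff' measurableSet_Ioi).1 hq] with x hx _ hxq using hx hxq
    · exact Filter.Eventually.of_forall fun x h => absurd h hq
  set T : Set ℝ := {x | (∀ q : ℚ, (u =ᵐ[volume.restrict (Ioi (q : ℝ))] 0) → q < x → u x = 0) ∧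
    u x ≠ 0 ∧ u =ᵐ[volume.restrict (Ioi x)] 0} with hT
  have hlt : ∀ x ∈ T, ∀ y ∈ T, ¬ x < y := by
    intro x hx y hy hxy
    obtain ⟨q, hxq, hqy⟩ := exists_rat_btwn hxy
    exact hy.2.1 (hy.1 q (ae_mono (Measure.restrict_mono (Ioi_subset_Ioi hxq.le) le_rfl) hx.2.2) hqy)
  have hsub : T.Subsingleton := fun x hx y hy =>
    le_antisymm (not_lt.1 (hlt y hy x hx)) (not_lt.1 (hlt x hx y hy))
  have h2 : ∀ᵐ x, x ∉ T := measure_eq_zero_iff_ae_notMem.1 (hsub.measure_zero volume)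
  filter_upwards [h1, h2] with x hx1 hx2 hu hz
  exact hx2 ⟨hx1, hu, hz⟩

lemma aux_half {s t : Set ℝ} (hs : MeasurableSet s)
    (hst : ∀ h : ℝ → ℂ, Integrable h → ∫ y, h y = (∫ y in s, h y) + ∫ y in t, h y)
    (ht : MeasurableSet t) {u v f g : ℝ → ℂ}
    (hu : MemLp u 2 (volume.restrict s)) (hv : MemLp v 2 (volume.restrict t))
    (hf : MemLp f 2 (volume : Measure ℝ)) (hg : MemLp g 2 (volume : Measure ℝ))
    (R : ℝ → ℝ → ℂ) (hR : ∀ x ∈ s, ∀ y ∈ t, R x y = u x * v y)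
    (hin : ∀ᵐ x, x ∈ s → Integrable (fun y => R x y * g y))
    (hF : Integrable (fun x : ℝ => ∫ y : ℝ, (starRingEnd ℂ) (f x) * R x y * g y))
    (C : ℝ) (hC0 : 0 ≤ C)
    (hC : ∀ f g : ℝ → ℂ, MemLp f 2 (volume : Measure ℝ) →
        MemLp g 2 (volume : Measure ℝ) →
        Function.support f ⊆ s → Function.support g ⊆ s →
        ‖∫ x : ℝ, ∫ y : ℝ, (starRingEnd ℂ) (f x) * R x y * g y‖ ≤
          C * (eLpNorm f 2 (volume : Measure ℝ)).toReal *
            (eLpNorm g 2 (volume : Measure ℝ)).toReal) :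
    ‖∫ x in s, ∫ y : ℝ, (starRingEnd ℂ) (f x) * R x y * g y‖ ≤
      (C + (eLpNorm u 2 (volume.restrict s)).toReal * (eLpNorm v 2 (volume.restrict t)).toReal) *
        (eLpNorm f 2 (volume : Measure ℝ)).toReal *
            (eLpNorm g 2 (volume : Measure ℝ)).toReal := by
  set b : ℂ := ∫ y in t, v y * g y with hb
  set F : ℝ → ℂ := fun x => ∫ y : ℝ, (starRingEnd ℂ) (f x) * R x y * g y with hFdef
  set G : ℝ → ℂ := fun x => ∫ y : ℝ,
    (starRingEnd ℂ) (s.indicator f x) * R x y * (s.indicator g y) with hG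
  have hfs : MemLp (s.indicator f) 2 volume := hf.indicator hs
  have hgs : MemLp (s.indicator g) 2 volume := hg.indicator hs
  have hdec : ∀ᵐ x ∂(volume.restrict s), F x = G x + u x * (starRingEnd ℂ) (f x) * b := by
    rw [ae_restrict_iff' hs]
    filter_upwards [hin] with x hx hxs
    have hi : Integrable (fun y => (starRingEnd ℂ) (f x) * R x y * g y) := by
      simpa [mul_assoc] using (hx hxs).const_mul ((starRingEnd ℂ) (f x))
    have e1 : G x = ∫ y in s, (starRingEnd ℂ) (f x) * R x y * g y := by
      rw [← integral_indicator hs]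
      refine integral_congr_ae (Filter.Eventually.of_forall fun y => ?_)
      by_cases hy : y ∈ s <;> simp [hy, hxs]
    have e2 : u x * (starRingEnd ℂ) (f x) * b =
        ∫ y in t, (starRingEnd ℂ) (f x) * R x y * g y := by
      rw [hb, ← integral_const_mul]
      refine setIntegral_congr_fun ht fun y hy => ?_
      simp only [hR x hxs y hy]
      ring
    rw [e1, e2]
    exact hst _ hi
  have hi2 : IntegrableOn (fun x => u x * (starRingEnd ℂ) (f x) * b) s :=
    (aux_intOn hu (aux_conj hf)).mul_const b
  have hi1 : IntegrableOn G s := by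
    refine (hF.integrableOn.sub hi2).congr ?_
    filter_upwards [hdec] with x hx
    simp only [Pi.sub_apply]
    change F x - _ = _
    rw [hx]; ring
  have hGs : ∫ x in s, G x = ∫ x, G x := by
    refine setIntegral_eq_integral_of_forall_compl_eq_zero fun x hx => ?_
    simp [hG, hx]
  rw [integral_congr_ae hdec, integral_add hi1 hi2, hGs, integral_mul_const]
  have k1 := hC _ _ hfs hgs (by simp) (by simp)
  have k2 := aux_cs hu (aux_conj hf)
  rw [aux_conj_norm] at k2
  have k3 : ‖b‖ ≤ _ := aux_cs hv hg
  have nf : (eLpNorm (s.indicator f) 2 volume).toReal ≤ (eLpNorm f 2 volume).toReal :=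
    ENNReal.toReal_mono hf.2.ne (eLpNorm_indicator_le _)
  have ng : (eLpNorm (s.indicator g) 2 volume).toReal ≤ (eLpNorm g 2 volume).toReal :=
    ENNReal.toReal_mono hg.2.ne (eLpNorm_indicator_le _)
  calc _ ≤ ‖∫ x, G x‖ + ‖(∫ x in s, u x * (starRingEnd ℂ) (f x)) * b‖ := norm_add_le _ _
    _ ≤ C * (eLpNorm f 2 volume).toReal * (eLpNorm g 2 volume).toReal +
        ((eLpNorm u 2 (volume.restrict s)).toReal * (eLpNorm f 2 volume).toReal) *
        ((eLpNorm v 2 (volume.restrict t)).toReal * (eLpNorm g 2 volume).toReal) := by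
        refine add_le_add (k1.trans ?_) ?_
        · gcongr
        · rw [norm_mul]
          gcongr
    _ = _ := by ring

lemma aux_split (c : ℝ) (h : ℝ → ℂ) (hi : Integrable h) :
    ∫ y, h y = (∫ y in Iio c, h y) + ∫ y in Ioi c, h y := by
  rw [← integral_Ici_eq_integral_Ioi, ← compl_Iio]
  exact (integral_add_compl measurableSet_Iio hi).symm

/-- for a kernel `R(x,y) = Ψ₁(min x y) · Ψ₂(max x y)` with `Ψ₁ ∈ L²(]-∞,c[)`
and `Ψ₂ ∈ L²(]c,∞[)`, boundedness of the associated bilinear form on `L²(ℝ)` is equivalent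
to boundedness on functions supported in `]-∞,c[` and in `]c,∞[` respectively. -/
theorem kernel_bounded_iff_diagonal_pieces_bounded
    (c : ℝ) (Ψ₁ Ψ₂ : ℝ → ℂ) (hΨ₁m : Measurable Ψ₁) (hΨ₂m : Measurable Ψ₂)
    (hΨ₁ : MemLp Ψ₁ 2 (volume.restrict (Iio c)))
    (hΨ₂ : MemLp Ψ₂ 2 (volume.restrict (Ioi c)))
    (R : ℝ → ℝ → ℂ) (hR : ∀ x y : ℝ, R x y = Ψ₁ (min x y) * Ψ₂ (max x y)) :
    (∃ C : ℝ, 0 ≤ C ∧ ∀ f g : ℝ → ℂ, MemLp f 2 (volume : Measure ℝ) →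
        MemLp g 2 (volume : Measure ℝ) →
        ‖∫ x : ℝ, ∫ y : ℝ, (starRingEnd ℂ) (f x) * R x y * g y‖ ≤
          C * (eLpNorm f 2 (volume : Measure ℝ)).toReal *
            (eLpNorm g 2 (volume : Measure ℝ)).toReal) ↔
    (∃ C₁ C₂ : ℝ, 0 ≤ C₁ ∧ 0 ≤ C₂ ∧
      (∀ f g : ℝ → ℂ, MemLp f 2 (volume : Measure ℝ) →
        MemLp g 2 (volume : Measure ℝ) →
        Function.support f ⊆ Iio c → Function.support g ⊆ Iio c →
        ‖∫ x : ℝ, ∫ y : ℝ, (starRingEnd ℂ) (f x) * R x y * g y‖ ≤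
          C₁ * (eLpNorm f 2 (volume : Measure ℝ)).toReal *
            (eLpNorm g 2 (volume : Measure ℝ)).toReal) ∧
      (∀ f g : ℝ → ℂ, MemLp f 2 (volume : Measure ℝ) →
        MemLp g 2 (volume : Measure ℝ) →
        Function.support f ⊆ Ioi c → Function.support g ⊆ Ioi c →
        ‖∫ x : ℝ, ∫ y : ℝ, (starRingEnd ℂ) (f x) * R x y * g y‖ ≤
          C₂ * (eLpNorm f 2 (volume : Measure ℝ)).toReal *
            (eLpNorm g 2 (volume : Measure ℝ)).toReal)) := by
  constructor
  · rintro ⟨C, hC0, hC⟩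
    exact ⟨C, C, hC0, hC0, fun f g hf hg _ _ => hC f g hf hg, fun f g hf hg _ _ => hC f g hf hg⟩
  rintro ⟨C₁, C₂, hC₁0, hC₂0, hC₁, hC₂⟩
  -- extra square integrability forced by the diagonal bounds
  have hL : ∀ᵐ x : ℝ, x < c → Ψ₁ x ≠ 0 → MemLp Ψ₂ 2 (volume.restrict (Ioo x c)) := by
    filter_upwards [aux_nonzero_left Ψ₁] with x hx hxc hne
    refine aux_test (A := Iio x) measurableSet_Iio measurableSet_Ioo (by simp) hΨ₂m
      (hΨ₁.mono_measure (Measure.restrict_mono (Iio_subset_Iio hxc.le) le_rfl)) (hx hne) R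
      (fun a ha y hy => ?_) C₁ hC₁0 (fun f g hf hg hfs hgs => hC₁ f g hf hg
        (hfs.trans (Iio_subset_Iio hxc.le)) (hgs.trans fun y hy => hy.2))
    have : a ≤ y := (lt_trans ha hy.1).le
    rw [hR, min_eq_left this, max_eq_right this]
  have hRt : ∀ᵐ x : ℝ, c < x → Ψ₂ x ≠ 0 → MemLp Ψ₁ 2 (volume.restrict (Ioo c x)) := by
    filter_upwards [aux_nonzero_right Ψ₂] with x hx hxc hne
    refine aux_test (A := Ioi x) measurableSet_Ioi measurableSet_Ioo (by simp) hΨ₁m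
      (hΨ₂.mono_measure (Measure.restrict_mono (Ioi_subset_Ioi hxc.le) le_rfl)) (hx hne) R
      (fun a ha y hy => ?_) C₂ hC₂0 (fun f g hf hg hfs hgs => hC₂ f g hf hg
        (hfs.trans (Ioi_subset_Ioi hxc.le)) (hgs.trans fun y hy => hy.1))
    have : y ≤ a := (lt_trans hy.2 ha).le
    rw [hR, min_eq_right this, max_eq_left this, mul_comm]
  set N₁ := (eLpNorm Ψ₁ 2 (volume.restrict (Iio c))).toReal with hN₁
  set N₂ := (eLpNorm Ψ₂ 2 (volume.restrict (Ioi c))).toReal with hN₂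
  refine ⟨(C₁ + N₁ * N₂) + (C₂ + N₂ * N₁), by positivity, fun f g hf hg => ?_⟩
  by_cases hF : Integrable (fun x : ℝ => ∫ y : ℝ, (starRingEnd ℂ) (f x) * R x y * g y)
  swap
  · rw [integral_undef hF, norm_zero]; positivity
  have inL : ∀ᵐ x : ℝ, x ∈ Iio c → Integrable (fun y => R x y * g y) := by
    filter_upwards [hL] with x hx hxc
    rw [mem_Iio] at hxc
    rw [← integrableOn_univ, ← Iio_union_Ici (a := x), ← Ico_union_Ici_eq_Ici hxc.le]
    refine IntegrableOn.union ?_ (IntegrableOn.union ?_ ?_)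
    · have h := (aux_intOn (hΨ₁.mono_measure
        (Measure.restrict_mono (Iio_subset_Iio hxc.le) le_rfl)) hg).const_mul (Ψ₂ x)
      refine IntegrableOn.congr_fun h (fun y hy => ?_) measurableSet_Iio
      have : y ≤ x := le_of_lt hy
      simp only [hR, min_eq_right this, max_eq_left this]; ring
    · rw [integrableOn_Ico_iff_integrableOn_Ioo]
      have h : IntegrableOn (fun y => Ψ₁ x * (Ψ₂ y * g y)) (Ioo x c) := by
        by_cases h0 : Ψ₁ x = 0
        · simp [h0]
        · exact (aux_intOn (hx hxc h0) hg).const_mul _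
      refine IntegrableOn.congr_fun h (fun y hy => ?_) measurableSet_Ioo
      have : x ≤ y := le_of_lt hy.1
      simp only [hR, min_eq_left this, max_eq_right this]; ring
    · rw [integrableOn_Ici_iff_integrableOn_Ioi]
      have h := (aux_intOn hΨ₂ hg).const_mul (Ψ₁ x)
      refine IntegrableOn.congr_fun h (fun y hy => ?_) measurableSet_Ioi
      have : x ≤ y := (lt_trans hxc hy).le
      simp only [hR, min_eq_left this, max_eq_right this]; ring
  have inR : ∀ᵐ x : ℝ, x ∈ Ioi c → Integrable (fun y => R x y * g y) := by
    filter_upwards [hRt] with x hx hxc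
    rw [mem_Ioi] at hxc
    rw [← integrableOn_univ, ← Iic_union_Ioi (a := x), ← Iic_union_Ioc_eq_Iic hxc.le]
    refine IntegrableOn.union (IntegrableOn.union ?_ ?_) ?_
    · rw [integrableOn_Iic_iff_integrableOn_Iio]
      have h := (aux_intOn hΨ₁ hg).const_mul (Ψ₂ x)
      refine IntegrableOn.congr_fun h (fun y hy => ?_) measurableSet_Iio
      have : y ≤ x := (lt_trans hy hxc).le
      simp only [hR, min_eq_right this, max_eq_left this]; ring
    · rw [integrableOn_Ioc_iff_integrableOn_Ioo]
      have h : IntegrableOn (fun y => Ψ₂ x * (Ψ₁ y * g y)) (Ioo c x) := by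
        by_cases h0 : Ψ₂ x = 0
        · simp [h0]
        · exact (aux_intOn (hx hxc h0) hg).const_mul _
      refine IntegrableOn.congr_fun h (fun y hy => ?_) measurableSet_Ioo
      have : y ≤ x := le_of_lt hy.2
      simp only [hR, min_eq_right this, max_eq_left this]; ring
    · have h := (aux_intOn (hΨ₂.mono_measure
        (Measure.restrict_mono (Ioi_subset_Ioi hxc.le) le_rfl)) hg).const_mul (Ψ₁ x)
      refine IntegrableOn.congr_fun h (fun y hy => ?_) measurableSet_Ioi
      have : x ≤ y := le_of_lt hy
      simp only [hR, min_eq_left this, max_eq_right this]; ring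
  have k1 := aux_half measurableSet_Iio (aux_split c) measurableSet_Ioi hΨ₁ hΨ₂ hf hg R
    (fun x hx y hy => by
      have : x ≤ y := (lt_trans hx hy).le
      rw [hR, min_eq_left this, max_eq_right this]) inL hF C₁ hC₁0 hC₁
  have k2 := aux_half measurableSet_Ioi
    (fun h hi => (aux_split c h hi).trans (add_comm _ _)) measurableSet_Iio hΨ₂ hΨ₁ hf hg R
    (fun x hx y hy => by
      have : y ≤ x := (lt_trans hy hx).le
      rw [hR, min_eq_right this, max_eq_left this, mul_comm]) inR hF C₂ hC₂0 hC₂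
  rw [aux_split c _ hF, add_mul, add_mul]
  exact (norm_add_le _ _).trans (add_le_add k1 k2)
end

section
/- Let m ∈ ℂ ∖ ℤ with Re(m) > −1 and k ∈ ℂ with Re(k) > 0, and define the Bessel resolvent kernel G(x,y) := (1/k)·𝓘_m(k·min(x,y))·𝓚_m(k·max(x,y)) for x, y > 0. Then the corresponding integral operator is bounded on L²(]0,∞[): there exists C ≥ 0 such that for all square-integrable f, g : ]0,∞[ → ℂ one has ∫_0^∞ ∫_0^∞ |f(x)|·|G(x,y)|·|g(y)| dx dy ≤ C·‖f‖_{L²}·‖g‖_{L²}. -/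
open Complex Set MeasureTheory



/-- Olver-normalized hypergeometric function `₀𝐅₁(c; w) = ∑ wⁿ/(n! Γ(c+n))`. -/
noncomputable def zeroF1reg (c w : ℂ) : ℂ :=
  ∑' n : ℕ, w ^ n / ((n.factorial : ℂ) * Complex.Gamma (c + n))

/-- Hyperbolic 1d Bessel function `𝓘_m(z) = √π (z/2)^{1/2+m} ₀𝐅₁(m+1; z²/4)`
(principal branch powers). -/
noncomputable def besselI1d (m z : ℂ) : ℂ :=
  (Real.sqrt Real.pi : ℂ) * (z / 2) ^ ((1 : ℂ) / 2 + m) * zeroF1reg (m + 1) (z ^ 2 / 4)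

/-- 1d Macdonald function `𝓚_m(z) = (𝓘_{-m}(z) - 𝓘_m(z))/sin(π m)` for `m ∉ ℤ`. -/
noncomputable def macdonaldK1d (m z : ℂ) : ℂ :=
  (besselI1d (-m) z - besselI1d m z) / Complex.sin (Real.pi * m)


lemma invGamma_bdd (c : ℂ) : ∃ B : ℝ, 0 ≤ B ∧ ∀ n : ℕ, ‖(Complex.Gamma (c + n))⁻¹‖ ≤ B := by
  obtain ⟨N, hN⟩ := exists_nat_ge (‖c‖ + 1)
  have hstep : ∀ n : ℕ, N ≤ n → ‖(Complex.Gamma (c + n))⁻¹‖ ≤ ‖(Complex.Gamma (c + N))⁻¹‖ := by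
    intro n hn
    induction n, hn using Nat.le_induction with
    | base => exact le_rfl
    | succ n hn ih =>
      refine le_trans ?_ ih
      have h := Complex.one_div_Gamma_eq_self_mul_one_div_Gamma_add_one (c + n)
      rw [h, norm_mul]
      have h1 : 1 ≤ ‖c + (n : ℂ)‖ := by
        have h2 : ‖(n : ℂ)‖ ≤ ‖c + n‖ + ‖c‖ := by
          have := norm_sub_le (c + (n : ℂ)) c
          simpa using this
        have h3 : (N : ℝ) ≤ n := by exact_mod_cast hn
        rw [Complex.norm_natCast] at h2
        linarith
      push_cast
      rw [← add_assoc]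
      exact le_mul_of_one_le_left (norm_nonneg _) h1
  refine ⟨∑ n ∈ Finset.range (N + 1), ‖(Complex.Gamma (c + n))⁻¹‖,
    Finset.sum_nonneg fun _ _ => norm_nonneg _, fun n => ?_⟩
  by_cases hn : n ≤ N
  · exact Finset.single_le_sum (f := fun n : ℕ => ‖(Complex.Gamma (c + n))⁻¹‖)
      (fun _ _ => norm_nonneg _) (Finset.mem_range.2 (by omega))
  · refine (hstep n (by omega)).trans ?_
    exact Finset.single_le_sum (f := fun n : ℕ => ‖(Complex.Gamma (c + n))⁻¹‖)
      (fun _ _ => norm_nonneg _) (Finset.mem_range.2 (by omega))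

lemma zeroF1reg_summable (c w : ℂ) :
    Summable fun n : ℕ => w ^ n / ((n.factorial : ℂ) * Complex.Gamma (c + n)) := by
  obtain ⟨B, hB, h⟩ := invGamma_bdd c
  refine Summable.of_norm_bounded (g := fun n : ℕ => B * (‖w‖ ^ n / n.factorial))
    ((Real.summable_pow_div_factorial ‖w‖).mul_left B) fun n => ?_
  rw [div_eq_mul_inv, mul_inv, norm_mul, norm_mul, norm_inv, Complex.norm_natCast, norm_pow]
  have := h n
  calc ‖w‖ ^ n * ((n.factorial : ℝ)⁻¹ * ‖(Complex.Gamma (c + n))⁻¹‖)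
      ≤ ‖w‖ ^ n * ((n.factorial : ℝ)⁻¹ * B) := by gcongr
    _ = _ := by ring

lemma zeroF1reg_term_succ (c w : ℂ) (n : ℕ) :
    ((n + 1 : ℕ) : ℂ) * w ^ n / (((n + 1).factorial : ℂ) * Complex.Gamma (c + (n + 1 : ℕ)))
      = w ^ n / ((n.factorial : ℂ) * Complex.Gamma (c + 1 + n)) := by
  rw [Nat.factorial_succ]
  have h1 : c + ((n + 1 : ℕ) : ℂ) = c + 1 + n := by push_cast; ring
  rw [h1]
  have h2 : ((n + 1 : ℕ) : ℂ) ≠ 0 := by exact_mod_cast Nat.succ_ne_zero n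
  push_cast at h2 ⊢
  rw [mul_assoc, mul_div_mul_left _ _ h2]

lemma zeroF1reg_hasDerivAt (c w : ℂ) : HasDerivAt (zeroF1reg c) (zeroF1reg (c + 1) w) w := by
  obtain ⟨B, hB, h⟩ := invGamma_bdd c
  set R : ℝ := ‖w‖ + 1
  have hR : 0 < R := by positivity
  set u : ℕ → ℝ := fun n => B * (n * R ^ (n - 1) / n.factorial) with hu
  have hus : Summable u := by
    refine Summable.mul_left B ?_
    rw [← summable_nat_add_iff 1]
    refine (Real.summable_pow_div_factorial R).congr fun n => ?_
    rw [Nat.factorial_succ]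
    have : ((n : ℝ) + 1) ≠ 0 := by positivity
    push_cast
    rw [mul_div_mul_left _ _ this]
  set g' : ℕ → ℂ → ℂ := fun n z =>
    (n : ℂ) * z ^ (n - 1) / ((n.factorial : ℂ) * Complex.Gamma (c + n)) with hg'
  have key := hasDerivAt_tsum_of_isPreconnected (𝕜 := ℂ) (F := ℂ) (u := u)
    (g := fun n z => z ^ n / ((n.factorial : ℂ) * Complex.Gamma (c + n))) (g' := g')
    (t := Metric.ball 0 R) (y₀ := w) (y := w) hus Metric.isOpen_ball
    (convex_ball _ _).isPreconnected ?_ ?_ ?_ (zeroF1reg_summable c w) ?_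
  · have e : zeroF1reg (c + 1) w = ∑' n, g' n w := by
      have hs : Summable fun n => g' n w := by
        rw [← summable_nat_add_iff 1]
        refine (zeroF1reg_summable (c + 1) w).congr fun n => ?_
        simp only [hg', Nat.add_sub_cancel]
        rw [zeroF1reg_term_succ]
      rw [hs.tsum_eq_zero_add]
      simp only [hg', Nat.add_sub_cancel, zeroF1reg_term_succ]
      simp [zeroF1reg]
    rw [e]
    exact key
  · intro n y _
    exact (hasDerivAt_pow n y).div_const _
  · intro n y hy
    simp only [hg', hu]
    rw [div_eq_mul_inv, mul_inv, norm_mul, norm_mul, norm_mul, norm_inv, Complex.norm_natCast,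
      Complex.norm_natCast, norm_pow]
    have h1 := h n
    have h2 : ‖y‖ ≤ R := by simpa using (Metric.mem_ball.1 hy).le
    calc (n : ℝ) * ‖y‖ ^ (n - 1) * ((n.factorial : ℝ)⁻¹ * ‖(Complex.Gamma (c + n))⁻¹‖)
        ≤ (n : ℝ) * R ^ (n - 1) * ((n.factorial : ℝ)⁻¹ * B) := by gcongr
      _ = _ := by ring
  · simp [R]
  · simp [R]

lemma zeroF1reg_contig (c w : ℂ) :
    zeroF1reg c w = c * zeroF1reg (c + 1) w + w * zeroF1reg (c + 2) w := by
  have hs1 := (zeroF1reg_summable (c + 1) w).mul_left c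
  have hs2 : Summable fun n : ℕ =>
      (n : ℂ) * w ^ n / ((n.factorial : ℂ) * Complex.Gamma (c + 1 + n)) := by
    rw [← summable_nat_add_iff 1]
    refine ((zeroF1reg_summable (c + 1 + 1) w).mul_left w).congr fun n => ?_
    rw [← zeroF1reg_term_succ, pow_succ]
    ring
  have e2 : w * zeroF1reg (c + 2) w = ∑' n : ℕ,
      (n : ℂ) * w ^ n / ((n.factorial : ℂ) * Complex.Gamma (c + 1 + n)) := by
    rw [hs2.tsum_eq_zero_add]
    have : c + 2 = c + 1 + 1 := by ring
    rw [zeroF1reg, this, ← tsum_mul_left]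
    simp only [Nat.cast_zero, zero_mul, zero_div, zero_add]
    congr 1
    ext n
    rw [← zeroF1reg_term_succ, pow_succ]
    ring
  rw [e2, zeroF1reg, zeroF1reg, ← tsum_mul_left, ← hs1.tsum_add hs2]
  congr 1
  ext n
  have h := Complex.one_div_Gamma_eq_self_mul_one_div_Gamma_add_one (c + n)
  have h1 : c + 1 + (n : ℂ) = c + n + 1 := by ring
  rw [h1, div_eq_mul_inv, div_eq_mul_inv, div_eq_mul_inv, mul_inv, mul_inv, h]
  ring

lemma zeroF1reg_continuous (c : ℂ) : Continuous (zeroF1reg c) :=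
  continuous_iff_continuousAt.2 fun w => (zeroF1reg_hasDerivAt c w).continuousAt

lemma zeroF1reg_zero (c : ℂ) : zeroF1reg c 0 = (Complex.Gamma c)⁻¹ := by
  rw [zeroF1reg, tsum_eq_single 0]
  · simp
  · intro n hn
    simp [hn]

/-- Gronwall-type monotonicity. -/
lemma gronwall_antitone {N N' W w : ℝ → ℝ} {b : ℝ}
    (hN : ∀ x, b < x → HasDerivAt N (N' x) x) (hW : ∀ x, b < x → HasDerivAt W (w x) x)
    (h : ∀ x, b < x → N' x ≤ w x * N x) :
    AntitoneOn (fun x => N x * Real.exp (-W x)) (Ioi b) := by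
  have hd : ∀ x, b < x → HasDerivAt (fun x => N x * Real.exp (-W x))
      (N' x * Real.exp (-W x) + N x * (Real.exp (-W x) * (-w x))) x := fun x hx =>
    (hN x hx).mul ((hW x hx).neg.exp)
  refine antitoneOn_of_deriv_nonpos (convex_Ioi b) ?_ ?_ ?_
  · intro x hx
    exact (hd x hx).continuousAt.continuousWithinAt
  · rw [interior_Ioi]
    intro x hx
    exact (hd x hx).differentiableAt.differentiableWithinAt
  · rw [interior_Ioi]
    intro x hx
    rw [(hd x hx).deriv]
    have := h x hx
    have := Real.exp_pos (-W x)
    nlinarith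



/-- Integrand of the Macdonald integral representation. -/
noncomputable def kerE (m k : ℂ) (s u : ℝ) : ℂ :=
  cexp (-m * u - k * (Real.exp u + s * Real.exp (-u) : ℝ))

/-- The Macdonald integral. -/
noncomputable def intF (m k : ℂ) (s : ℝ) : ℂ := ∫ u : ℝ, kerE m k s u

lemma kerE_norm (m k : ℂ) (s u : ℝ) :
    ‖kerE m k s u‖ = Real.exp (-m.re * u - k.re * (Real.exp u + s * Real.exp (-u))) := by
  rw [kerE, Complex.norm_exp]
  congr 1
  rw [sub_re, re_mul_ofReal, re_mul_ofReal, neg_re]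

lemma kerE_continuous (m k : ℂ) (s : ℝ) : Continuous (kerE m k s) := by
  unfold kerE
  fun_prop

lemma exp_add_exp_neg_ge (u : ℝ) : 2 + u ^ 2 / 2 ≤ Real.exp u + Real.exp (-u) := by
  rcases le_total 0 u with h | h
  · have h1 := Real.quadratic_le_exp_of_nonneg h
    have h2 := Real.add_one_le_exp (-u)
    linarith
  · have h1 := Real.quadratic_le_exp_of_nonneg (x := -u) (by linarith)
    have h2 := Real.add_one_le_exp u
    nlinarith

lemma integrable_exp_quad (a b : ℝ) (hb : 0 < b) :
    Integrable (fun u : ℝ => Real.exp (-a * u - b * u ^ 2)) := by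
  have h := (integrable_cexp_quadratic (b := (b : ℂ)) (by simpa using hb) ((-a : ℝ) : ℂ) 0).norm
  refine h.congr (Filter.Eventually.of_forall fun u => ?_)
  simp only
  rw [Complex.norm_exp]
  congr 1
  have : -(b : ℂ) * (u : ℂ) ^ 2 + ((-a : ℝ) : ℂ) * u + 0 = ((-a * u - b * u ^ 2 : ℝ) : ℂ) := by
    push_cast; ring
  rw [this, ofReal_re]

lemma kerE_integrable (m k : ℂ) (hk : 0 < k.re) (s : ℝ) (hs : 0 < s) :
    Integrable (kerE m k s) := by
  set σ := min 1 s
  have hσ : 0 < σ := lt_min one_pos hs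
  refine (integrable_exp_quad m.re (k.re * σ / 2) (by positivity)).mono'
    (kerE_continuous m k s).aestronglyMeasurable (Filter.Eventually.of_forall fun u => ?_)
  rw [kerE_norm]
  apply Real.exp_le_exp.2
  have h1 := exp_add_exp_neg_ge u
  have h2 : σ * (2 + u ^ 2 / 2) ≤ Real.exp u + s * Real.exp (-u) := by
    have e1 : σ * Real.exp u ≤ 1 * Real.exp u := by gcongr; exact min_le_left _ _
    have e2 : σ * Real.exp (-u) ≤ s * Real.exp (-u) := by gcongr; exact min_le_right _ _
    nlinarith
  have h3 : σ * (u ^ 2 / 2) ≤ Real.exp u + s * Real.exp (-u) := by nlinarith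
  have h4 := mul_le_mul_of_nonneg_left h3 hk.le
  nlinarith

lemma range_exp_eq : Real.exp '' univ = Ioi 0 := by
  rw [image_univ, Real.range_exp]

lemma kerE_integrable_zero (m k : ℂ) (hk : 0 < k.re) (hm : m.re < 0) :
    Integrable (kerE m k 0) := by
  have h := integrableOn_rpow_mul_exp_neg_mul_rpow (p := 1) (s := -m.re - 1) (b := k.re)
    (by linarith) one_pos hk
  rw [← range_exp_eq, integrableOn_image_iff_integrableOn_abs_deriv_smul MeasurableSet.univ
    (fun x _ => (Real.hasDerivAt_exp x).hasDerivWithinAt) Real.exp_injective.injOn,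
    integrableOn_univ] at h
  refine h.mono' (kerE_continuous m k 0).aestronglyMeasurable
    (Filter.Eventually.of_forall fun u => ?_)
  rw [kerE_norm, abs_of_pos (Real.exp_pos u), smul_eq_mul, ← Real.exp_mul, Real.rpow_one,
    ← Real.exp_add, ← Real.exp_add]
  apply le_of_eq
  congr 1
  ring

lemma kerE_norm_mono (m k : ℂ) (hk : 0 < k.re) {s t : ℝ} (hst : s ≤ t) (u : ℝ) :
    ‖kerE m k t u‖ ≤ ‖kerE m k s u‖ := by
  rw [kerE_norm, kerE_norm]
  gcongr

lemma kerE_shift (m k : ℂ) (s u : ℝ) :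
    (Real.exp (-u) : ℂ) * kerE m k s u = kerE (m + 1) k s u := by
  rw [kerE, kerE, Complex.ofReal_exp, ← Complex.exp_add]
  congr 1
  push_cast
  ring

lemma kerE_shift' (m k : ℂ) (s u : ℝ) :
    (Real.exp u : ℂ) * kerE m k s u = kerE (m - 1) k s u := by
  rw [kerE, kerE, Complex.ofReal_exp, ← Complex.exp_add]
  congr 1
  push_cast
  ring

lemma intF_hasDerivAt (m k : ℂ) (hk : 0 < k.re) (s : ℝ) (hs : 0 < s) :
    HasDerivAt (intF m k) (-k * intF (m + 1) k s) s := by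
  have h := hasDerivAt_integral_of_dominated_loc_of_deriv_le (μ := volume) (𝕜 := ℝ)
    (F := fun s u => kerE m k s u) (F' := fun s u => -k * kerE (m + 1) k s u) (x₀ := s)
    (s := Ioi (s / 2)) (bound := fun u => ‖k‖ * ‖kerE (m + 1) k (s / 2) u‖)
    (Ioi_mem_nhds (by linarith))
    (Filter.Eventually.of_forall fun s => (kerE_continuous m k s).aestronglyMeasurable)
    (kerE_integrable m k hk s hs)
    ((kerE_continuous (m + 1) k s).const_mul _).aestronglyMeasurable
    (Filter.Eventually.of_forall fun u t ht => ?_)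
    ((kerE_integrable (m + 1) k hk (s / 2) (by linarith)).norm.const_mul _)
    (Filter.Eventually.of_forall fun u t ht => ?_)
  · have := h.2
    rw [integral_const_mul] at this
    exact this
  · rw [norm_mul, norm_neg]
    gcongr
    exact kerE_norm_mono _ _ hk (le_of_lt ht) u
  · rw [← kerE_shift]
    have e : HasDerivAt (fun t : ℝ => (-m * u - k * (Real.exp u + t * Real.exp (-u) : ℝ) : ℂ))
        (-k * Real.exp (-u)) t := by
      have e1 : HasDerivAt (fun t : ℝ => ((Real.exp u + t * Real.exp (-u) : ℝ) : ℂ))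
          ((1 * Real.exp (-u) : ℝ) : ℂ) t :=
        (((hasDerivAt_id t).mul_const _).const_add _).ofReal_comp
      have e2 := (e1.const_mul k).const_sub (-m * u)
      refine e2.congr_deriv ?_
      push_cast; ring
    have e3 := e.cexp
    refine e3.congr_deriv ?_
    rw [kerE]; ring

lemma intF_reflect (m k : ℂ) (s : ℝ) (hs : 0 < s) :
    intF m k s = (s : ℂ) ^ (-m) * intF (-m) k s := by
  rw [intF, intF, ← integral_sub_left_eq_self (kerE m k s) volume (Real.log s),
    ← integral_const_mul]
  congr 1
  ext u
  rw [kerE, kerE, cpow_def_of_ne_zero (by exact_mod_cast hs.ne'), ← Complex.exp_add]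
  congr 1
  have h1 : Real.exp (Real.log s - u) = s * Real.exp (-u) := by
    rw [sub_eq_add_neg, Real.exp_add, Real.exp_log hs]
  have h2 : s * Real.exp (-(Real.log s - u)) = Real.exp u := by
    rw [neg_sub, sub_eq_add_neg, Real.exp_add, Real.exp_neg, Real.exp_log hs]
    field_simp
  rw [h1, h2, ← Complex.ofReal_log hs.le]
  push_cast
  ring

lemma kerE_hasDerivAt_u (m k : ℂ) (s u : ℝ) :
    HasDerivAt (kerE m k s)
      (-m * kerE m k s u - k * kerE (m - 1) k s u + k * (s * kerE (m + 1) k s u)) u := by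
  rw [← kerE_shift, ← kerE_shift']
  have e1 : HasDerivAt (fun u : ℝ => ((Real.exp u + s * Real.exp (-u) : ℝ) : ℂ))
      ((Real.exp u + s * (Real.exp (-u) * (-1)) : ℝ) : ℂ) u :=
    ((Real.hasDerivAt_exp u).add (((hasDerivAt_neg u).exp).const_mul s)).ofReal_comp
  have e2 := (((hasDerivAt_id u).ofReal_comp.const_mul (-m)).sub (e1.const_mul k)).cexp
  refine e2.congr_deriv ?_
  rw [kerE]
  simp only [id, Pi.sub_apply]
  push_cast
  ring

lemma intF_recur (m k : ℂ) (hk : 0 < k.re) (s : ℝ) (hs : 0 < s) :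
    m * intF m k s = k * (s * intF (m + 1) k s - intF (m - 1) k s) := by
  have i0 := kerE_integrable m k hk s hs
  have i1 := kerE_integrable (m + 1) k hk s hs
  have i2 := kerE_integrable (m - 1) k hk s hs
  have h := integral_eq_zero_of_hasDerivAt_of_integrable (kerE_hasDerivAt_u m k s)
    (((i0.const_mul _).sub (i2.const_mul _)).add ((i1.const_mul _).const_mul _)) i0
  have i3 : Integrable fun u => -m * kerE m k s u - k * kerE (m - 1) k s u :=
    (i0.const_mul _).sub (i2.const_mul _)
  rw [integral_add i3 ((i1.const_mul _).const_mul _),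
    integral_sub (i0.const_mul _) (i2.const_mul _), integral_const_mul, integral_const_mul,
    integral_const_mul, integral_const_mul] at h
  simp only [intF]
  linear_combination -h

lemma intF_recur_zero (m k : ℂ) (hk : 0 < k.re) (hm : m.re < 0) :
    m * intF m k 0 = -k * intF (m - 1) k 0 := by
  have i0 := kerE_integrable_zero m k hk hm
  have i2 := kerE_integrable_zero (m - 1) k hk (by simp; linarith)
  have h := integral_eq_zero_of_hasDerivAt_of_integrable
    (f' := fun u => -m * kerE m k 0 u - k * kerE (m - 1) k 0 u)
    (fun u => by simpa using kerE_hasDerivAt_u m k 0 u)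
    ((i0.const_mul _).sub (i2.const_mul _)) i0
  rw [integral_sub (i0.const_mul _) (i2.const_mul _), integral_const_mul, integral_const_mul] at h
  simp only [intF]
  linear_combination -h

lemma intF_zero_hasDerivAt (m k : ℂ) (hk : 0 < k.re) (hm : m.re < 0) :
    HasDerivAt (fun k => intF m k 0) (-intF (m - 1) k 0) k := by
  have hk2 : 0 < k.re / 2 := by linarith
  have h := hasDerivAt_integral_of_dominated_loc_of_deriv_le (μ := volume) (𝕜 := ℂ)
    (F := fun k u => kerE m k 0 u) (F' := fun k u => - kerE (m - 1) k 0 u) (x₀ := k)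
    (s := {z : ℂ | k.re / 2 < z.re})
    (bound := fun u => ‖kerE (m - 1) ((k.re / 2 : ℝ) : ℂ) 0 u‖)
    ((isOpen_lt continuous_const continuous_re).mem_nhds (by simp; linarith))
    (Filter.Eventually.of_forall fun k => (kerE_continuous m k 0).aestronglyMeasurable)
    (kerE_integrable_zero m k hk hm)
    ((kerE_continuous (m - 1) k 0).neg).aestronglyMeasurable
    (Filter.Eventually.of_forall fun u t ht => ?_)
    ((kerE_integrable_zero (m - 1) _ (by simpa using hk2) (by simp; linarith)).norm)
    (Filter.Eventually.of_forall fun u t ht => ?_)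
  · have := h.2
    rw [integral_neg] at this
    exact this
  · rw [norm_neg, kerE_norm, kerE_norm, ofReal_re]
    have ht' : k.re / 2 < t.re := ht
    have : 0 < Real.exp u := Real.exp_pos u
    gcongr
  · rw [← kerE_shift']
    have e := (((hasDerivAt_id t).mul_const
      ((Real.exp u + 0 * Real.exp (-u) : ℝ) : ℂ)).const_sub (-m * u)).cexp
    refine e.congr_deriv ?_
    rw [kerE]
    simp only [id]
    push_cast; ring

lemma intF_zero_one (m : ℂ) (hm : m.re < 0) : intF m 1 0 = Complex.Gamma (-m) := by
  rw [Complex.Gamma_eq_integral (by simpa using hm), Complex.GammaIntegral, ← range_exp_eq,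
    integral_image_eq_integral_abs_deriv_smul MeasurableSet.univ
    (fun x _ => (Real.hasDerivAt_exp x).hasDerivWithinAt) Real.exp_injective.injOn,
    Measure.restrict_univ, intF]
  congr 1
  ext u
  rw [kerE, abs_of_pos (Real.exp_pos u), real_smul, cpow_def_of_ne_zero
    (by exact_mod_cast (Real.exp_pos u).ne'), ← Complex.ofReal_log (Real.exp_pos u).le,
    Real.log_exp, Complex.ofReal_exp, Complex.ofReal_exp, ← Complex.exp_add, ← Complex.exp_add]
  congr 1
  push_cast
  ring

lemma intF_zero_eq (m k : ℂ) (hk : 0 < k.re) (hm : m.re < 0) :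
    intF m k 0 = Complex.Gamma (-m) * k ^ m := by
  set S : Set ℂ := {z : ℂ | 0 < z.re}
  have hS : Convex ℝ S := convex_halfSpace_re_gt 0
  have hSo : IsOpen S := isOpen_lt continuous_const continuous_re
  set q : ℂ → ℂ := fun z => intF m z 0 * z ^ (-m)
  have hne : ∀ z ∈ S, z ≠ 0 := by
    rintro z hz rfl
    simp [S] at hz
  have hq : ∀ z ∈ S, HasDerivAt q 0 z := by
    intro z hz
    have h1 := intF_zero_hasDerivAt m z hz hm
    have h2 : HasDerivAt (fun z : ℂ => z ^ (-m)) (-m * z ^ (-m - 1)) z := by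
      simpa using (hasDerivAt_id z).cpow_const (c := -m) (Or.inl hz)
    have h3 := h1.mul h2
    refine h3.congr_deriv ?_
    rw [cpow_sub _ _ (hne z hz), cpow_one]
    have h4 := intF_recur_zero m z hz hm
    have := hne z hz
    field_simp
    linear_combination -(z ^ (-m)) * h4
  have hconst : q k = q 1 := by
    refine hSo.is_const_of_deriv_eq_zero hS.isPreconnected
      (fun z hz => (hq z hz).differentiableAt.differentiableWithinAt)
      (fun z hz => (hq z hz).deriv) hk (by simp [S])
  simp only [q, one_cpow, mul_one, intF_zero_one m hm] at hconst
  rw [← hconst, mul_assoc, ← cpow_add _ _ (hne k hk)]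
  simp

lemma intF_tendsto_zero (m k : ℂ) (hk : 0 < k.re) (hm : m.re < 0) :
    Filter.Tendsto (intF m k) (nhdsWithin 0 (Ioi 0)) (nhds (Complex.Gamma (-m) * k ^ m)) := by
  rw [← intF_zero_eq m k hk hm]
  refine tendsto_integral_filter_of_dominated_convergence (fun u => ‖kerE m k 0 u‖)
    (Filter.Eventually.of_forall fun s => (kerE_continuous m k s).aestronglyMeasurable)
    ?_ (kerE_integrable_zero m k hk hm).norm (Filter.Eventually.of_forall fun u => ?_)
  · filter_upwards [self_mem_nhdsWithin] with s hs
    exact Filter.Eventually.of_forall fun u => kerE_norm_mono m k hk (le_of_lt hs) u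
  · have : Continuous fun s : ℝ => kerE m k s u := by unfold kerE; fun_prop
    exact (this.tendsto 0).mono_left nhdsWithin_le_nhds



/-- Series side of the Macdonald integral. -/
noncomputable def serH (m k : ℂ) (s : ℝ) : ℂ :=
  (Real.pi / Complex.sin (Real.pi * m)) *
    ((s : ℂ) ^ (-m) * k ^ (-m) * zeroF1reg (-m + 1) (k ^ 2 * s)
      - k ^ m * zeroF1reg (m + 1) (k ^ 2 * s))

lemma zeroF1reg_comp_hasDerivAt (c k : ℂ) (s : ℝ) :
    HasDerivAt (fun s : ℝ => zeroF1reg c (k ^ 2 * s)) (zeroF1reg (c + 1) (k ^ 2 * s) * k ^ 2) s := by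
  have e1 : HasDerivAt (fun s : ℝ => k ^ 2 * (s : ℂ)) (k ^ 2) s := by
    simpa using ((hasDerivAt_id s).ofReal_comp).const_mul (k ^ 2)
  exact (zeroF1reg_hasDerivAt c (k ^ 2 * s)).comp s e1

lemma cpow_ofReal_hasDerivAt (c : ℂ) (s : ℝ) (hs : 0 < s) :
    HasDerivAt (fun s : ℝ => (s : ℂ) ^ c) (c * ((s : ℂ) ^ c / s)) s := by
  have h1 : HasDerivAt (fun z : ℂ => z ^ c) (c * (s : ℂ) ^ (c - 1)) (s : ℂ) := by
    simpa using (hasDerivAt_id (s : ℂ)).cpow_const (c := c) (Or.inl (by simpa using hs))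
  have h2 := h1.comp_ofReal
  rw [cpow_sub _ _ (by exact_mod_cast hs.ne'), cpow_one] at h2
  exact h2

lemma sin_shift (m : ℂ) : Complex.sin (Real.pi * (m + 1)) = - Complex.sin (Real.pi * m) := by
  rw [mul_add, mul_one, Complex.sin_add_pi]

lemma sin_shift' (m : ℂ) : Complex.sin (Real.pi * (m - 1)) = - Complex.sin (Real.pi * m) := by
  rw [mul_sub, mul_one, Complex.sin_sub_pi]

lemma serH_hasDerivAt (m k : ℂ) (hk : k ≠ 0) (s : ℝ) (hs : 0 < s) :
    HasDerivAt (serH m k) (-k * serH (m + 1) k s) s := by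
  have hs0 : (s : ℂ) ≠ 0 := by exact_mod_cast hs.ne'
  have h1 := (((cpow_ofReal_hasDerivAt (-m) s hs).mul_const (k ^ (-m))).mul
    (zeroF1reg_comp_hasDerivAt (-m + 1) k s)).sub
    ((zeroF1reg_comp_hasDerivAt (m + 1) k s).const_mul (k ^ m))
  have h2 := h1.const_mul (Real.pi / Complex.sin (Real.pi * m))
  refine h2.congr_deriv ?_
  rw [serH, sin_shift, div_neg]
  have e1 : -(m + 1) = -m - 1 := by ring
  have hc := zeroF1reg_contig (-m) (k ^ 2 * s)
  have e2 : -m + 1 + 1 = -m + 2 := by ring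
  rw [e1, cpow_sub _ _ hs0, cpow_sub _ _ hk, cpow_add _ _ hk, cpow_one, cpow_one, sub_add_cancel,
    e2, hc]
  field_simp

lemma serH_reflect (m k : ℂ) (s : ℝ) (hs : 0 < s) :
    serH m k s = (s : ℂ) ^ (-m) * serH (-m) k s := by
  have hs0 : (s : ℂ) ≠ 0 := by exact_mod_cast hs.ne'
  have h : (s : ℂ) ^ (-m) * (s : ℂ) ^ m = 1 := by
    rw [← cpow_add _ _ hs0]; simp
  rw [serH, serH, mul_neg, Complex.sin_neg, neg_neg, div_neg]
  linear_combination (Real.pi / Complex.sin (Real.pi * m)) * k ^ m *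
    zeroF1reg (m + 1) (k ^ 2 * s) * h

lemma serH_recur (m k : ℂ) (hk : k ≠ 0) (s : ℝ) (hs : 0 < s) :
    m * serH m k s = k * (s * serH (m + 1) k s - serH (m - 1) k s) := by
  have hs0 : (s : ℂ) ≠ 0 := by exact_mod_cast hs.ne'
  rw [serH, serH, serH, sin_shift, sin_shift', div_neg]
  have e1 : -(m + 1) = -m - 1 := by ring
  have e2 : -(m - 1) = -m + 1 := by ring
  have hc := zeroF1reg_contig (-m) (k ^ 2 * s)
  have hc2 := zeroF1reg_contig m (k ^ 2 * s)
  have e3 : -m + 1 + 1 = -m + 2 := by ring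
  have e4 : m + 1 + 1 = m + 2 := by ring
  rw [e1, e2, cpow_sub _ _ hs0, cpow_sub _ _ hk, cpow_sub _ _ hk, cpow_add _ _ hk,
    cpow_add _ _ hk, cpow_add _ _ hs0, cpow_one, cpow_one, sub_add_cancel, sub_add_cancel,
    e3, e4, hc, hc2]
  field_simp
  ring

lemma sin_ne (m : ℂ) (hm : ∀ n : ℤ, m ≠ (n : ℂ)) : Complex.sin (Real.pi * m) ≠ 0 := by
  rw [Ne, Complex.sin_eq_zero_iff]
  rintro ⟨n, hn⟩
  apply hm n
  have : (Real.pi : ℂ) ≠ 0 := by exact_mod_cast Real.pi_ne_zero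
  rw [mul_comm] at hn
  exact mul_right_cancel₀ this hn

lemma cpow_ofReal_tendsto_zero (c : ℂ) (hc : 0 < c.re) :
    Filter.Tendsto (fun s : ℝ => (s : ℂ) ^ c) (nhdsWithin 0 (Ioi 0)) (nhds 0) := by
  rw [tendsto_zero_iff_norm_tendsto_zero]
  have h : Filter.Tendsto (fun s : ℝ => s ^ c.re) (nhdsWithin 0 (Ioi 0)) (nhds 0) := by
    have := (Real.continuousAt_rpow_const 0 c.re (Or.inr hc.le)).tendsto
    rw [Real.zero_rpow hc.ne'] at this
    exact this.mono_left nhdsWithin_le_nhds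
  refine h.congr' ?_
  filter_upwards [self_mem_nhdsWithin] with s hs
  rw [Complex.norm_cpow_eq_rpow_re_of_pos hs]

lemma serH_tendsto (m k : ℂ) (hm : ∀ n : ℤ, m ≠ (n : ℂ)) (hmre : m.re < 0) :
    Filter.Tendsto (serH m k) (nhdsWithin 0 (Ioi 0)) (nhds (Complex.Gamma (-m) * k ^ m)) := by
  have hΦ : ∀ c, Filter.Tendsto (fun s : ℝ => zeroF1reg c (k ^ 2 * s)) (nhdsWithin 0 (Ioi 0))
      (nhds ((Complex.Gamma c)⁻¹)) := by
    intro c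
    have h1 : Continuous (fun s : ℝ => zeroF1reg c (k ^ 2 * s)) :=
      (zeroF1reg_continuous c).comp (by fun_prop)
    have h2 := h1.tendsto 0
    simp only [ofReal_zero, mul_zero, zeroF1reg_zero] at h2
    exact h2.mono_left nhdsWithin_le_nhds
  have h := ((((cpow_ofReal_tendsto_zero (-m) (by simpa using hmre)).mul_const (k ^ (-m))).mul
    (hΦ (-m + 1))).sub ((hΦ (m + 1)).const_mul (k ^ m))).const_mul
    (Real.pi / Complex.sin (Real.pi * m))
  have e : (Real.pi / Complex.sin (Real.pi * m)) *
      (0 * k ^ (-m) * (Complex.Gamma (-m + 1))⁻¹ - k ^ m * (Complex.Gamma (m + 1))⁻¹)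
      = Complex.Gamma (-m) * k ^ m := by
    have h1 := Complex.Gamma_mul_Gamma_one_sub (-m)
    rw [mul_neg, Complex.sin_neg, sub_neg_eq_add, add_comm 1 m, div_neg] at h1
    have h2 : Complex.Gamma (m + 1) ≠ 0 := by
      apply Complex.Gamma_ne_zero
      intro n hn
      apply hm (-n - 1)
      push_cast
      linear_combination hn
    have h3 : (Real.pi : ℂ) / Complex.sin (Real.pi * m) =
      -(Complex.Gamma (-m) * Complex.Gamma (m + 1)) := by rw [h1]; ring
    rw [h3]
    field_simp
    ring
  rw [e] at h
  exact h

lemma int_shift {m : ℂ} (hm : ∀ n : ℤ, m ≠ (n : ℂ)) (j : ℤ) : ∀ n : ℤ, m + j ≠ (n : ℂ) := by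
  intro n h
  apply hm (n - j)
  push_cast
  linear_combination h

lemma int_neg {m : ℂ} (hm : ∀ n : ℤ, m ≠ (n : ℂ)) : ∀ n : ℤ, -m ≠ (n : ℂ) := by
  intro n h
  apply hm (-n)
  push_cast
  linear_combination -h

lemma intF_eq_serH_base (m k : ℂ) (hk : 0 < k.re) (hm : ∀ n : ℤ, m ≠ (n : ℂ))
    (h1 : -1 < m.re) (h2 : m.re < 1) (s : ℝ) (hs : 0 < s) : intF m k s = serH m k s := by
  have hk0 : k ≠ 0 := by rintro rfl; simp at hk
  have hm0 : m ≠ 0 := by simpa using hm 0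
  set D : ℂ → ℝ → ℂ := fun m s => intF m k s - serH m k s with hD
  have Dder : ∀ m s, 0 < s → HasDerivAt (D m) (-k * D (m + 1) s) s := by
    intro m s hs
    refine ((intF_hasDerivAt m k hk s hs).sub (serH_hasDerivAt m k hk0 s hs)).congr_deriv ?_
    simp only [hD]; ring
  have Dref : ∀ m s, 0 < s → D m s = (s : ℂ) ^ (-m) * D (-m) s := by
    intro m s hs
    simp only [hD]
    rw [intF_reflect m k s hs, serH_reflect m k s hs]; ring
  have Drec : ∀ m s, 0 < s → m * D m s = k * (s * D (m + 1) s - D (m - 1) s) := by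
    intro m s hs
    simp only [hD]
    linear_combination intF_recur m k hk s hs - serH_recur m k hk0 s hs
  have Dlim : ∀ m : ℂ, (∀ n : ℤ, m ≠ (n : ℂ)) → m.re < 0 →
      Filter.Tendsto (D m) (nhdsWithin 0 (Ioi 0)) (nhds 0) := by
    intro m hm hmre
    simpa using (intF_tendsto_zero m k hk hmre).sub (serH_tendsto m k hm hmre)
  have Drec' : ∀ m s, 0 < s → m * D m s = k * ((s : ℂ) ^ (-m) * D (-m - 1) s - D (m - 1) s) := by
    intro m s hs
    have hs0 : (s : ℂ) ≠ 0 := by exact_mod_cast hs.ne'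
    rw [Drec m s hs, Dref (m + 1) s hs, show -(m + 1) = -m - 1 by ring, cpow_sub _ _ hs0, cpow_one]
    field_simp
  set a := m.re with ha
  set K : ℝ := ‖k‖ ^ 2 / ‖m‖ with hK
  have hK0 : 0 ≤ K := by positivity
  have hmn : ‖m‖ ≠ 0 := by simpa using hm0
  have bound : ∀ (μ : ℂ) (s : ℝ), ‖μ‖ = ‖m‖ → 0 < s →
      ‖-k * D μ s‖ ≤ K * (s ^ (-μ.re) * ‖D (-μ - 1) s‖ + ‖D (μ - 1) s‖) := by
    intro μ s hμ hs
    have e := congrArg norm (Drec' μ s hs)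
    rw [norm_mul, norm_mul, hμ] at e
    have e2 : ‖(s : ℂ) ^ (-μ) * D (-μ - 1) s - D (μ - 1) s‖ ≤
        s ^ (-μ.re) * ‖D (-μ - 1) s‖ + ‖D (μ - 1) s‖ := by
      refine (norm_sub_le _ _).trans_eq ?_
      rw [norm_mul, Complex.norm_cpow_eq_rpow_re_of_pos hs, neg_re]
    have e3 : ‖D μ s‖ = ‖k‖ / ‖m‖ * ‖(s : ℂ) ^ (-μ) * D (-μ - 1) s - D (μ - 1) s‖ := by
      field_simp
      linarith
    rw [norm_mul, norm_neg, e3, hK]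
    calc _ = ‖k‖ ^ 2 / ‖m‖ * ‖(s : ℂ) ^ (-μ) * D (-μ - 1) s - D (μ - 1) s‖ := by ring
      _ ≤ _ := by gcongr
  set p := D (m - 1) with hp
  set r := D (-m - 1) with hr
  have pd : ∀ s, 0 < s → HasDerivAt p (-k * D m s) s := by
    intro s hs
    simpa using Dder (m - 1) s hs
  have rd : ∀ s, 0 < s → HasDerivAt r (-k * D (-m) s) s := by
    intro s hs
    simpa using Dder (-m - 1) s hs
  set W : ℝ → ℝ := fun s => K * (s ^ (1 - a) / (1 - a) + s ^ (1 + a) / (1 + a) + 2 * s) with hW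
  have anti := gronwall_antitone (b := 0) (N := fun s => ‖p s‖ ^ 2 + ‖r s‖ ^ 2)
    (N' := fun s => 2 * inner ℝ (p s) (-k * D m s) + 2 * inner ℝ (r s) (-k * D (-m) s))
    (W := W) (w := fun s => K * (s ^ (-a) + s ^ a + 2))
    (fun s hs => (pd s hs).norm_sq.add (rd s hs).norm_sq) ?_ ?_
  · have lim : Filter.Tendsto (fun s => (‖p s‖ ^ 2 + ‖r s‖ ^ 2) * Real.exp (-W s))
        (nhdsWithin 0 (Ioi 0)) (nhds 0) := by
      have hpl : Filter.Tendsto p (nhdsWithin 0 (Ioi 0)) (nhds 0) := by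
        refine Dlim (m - 1) ?_ (by simp; linarith)
        simpa [sub_eq_add_neg] using int_shift hm (-1)
      have hrl : Filter.Tendsto r (nhdsWithin 0 (Ioi 0)) (nhds 0) := by
        refine Dlim (-m - 1) ?_ (by simp; linarith)
        simpa [sub_eq_add_neg] using int_shift (int_neg hm) (-1)
      have h3 := (hpl.norm.pow 2).add (hrl.norm.pow 2)
      simp only [norm_zero, ne_eq, OfNat.ofNat_ne_zero, not_false_eq_true, zero_pow, add_zero] at h3
      refine squeeze_zero' (Filter.Eventually.of_forall fun s => by positivity) ?_ h3
      filter_upwards [self_mem_nhdsWithin] with s hs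
      have hs : 0 < s := hs
      have : 0 ≤ W s := by
        have : 0 < 1 - a := by linarith
        have : 0 < 1 + a := by linarith
        simp only [hW]
        positivity
      exact mul_le_of_le_one_right (by positivity) (Real.exp_le_one_iff.2 (by linarith))
    have le : ∀ t, 0 < t → (‖p t‖ ^ 2 + ‖r t‖ ^ 2) * Real.exp (-W t) ≤ 0 := by
      intro t ht
      refine ge_of_tendsto lim ?_
      filter_upwards [Ioo_mem_nhdsGT ht] with s hs
      exact anti hs.1 ht hs.2.le
    have h3 := nonpos_of_mul_nonpos_left (le s hs) (Real.exp_pos _)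
    have hp0 : ‖p s‖ ^ 2 = 0 := le_antisymm (by nlinarith [sq_nonneg ‖r s‖]) (sq_nonneg _)
    have hr0 : ‖r s‖ ^ 2 = 0 := le_antisymm (by nlinarith [sq_nonneg ‖p s‖]) (sq_nonneg _)
    have hp1 : p s = 0 := by simpa using hp0
    have hr1 : r s = 0 := by simpa using hr0
    have h4 := Drec' m s hs
    rw [← hp, ← hr, hp1, hr1] at h4
    have h5 : D m s = 0 := by simpa [hm0] using h4
    exact sub_eq_zero.1 h5
  · intro s hs
    have ha1 : (1 - a) ≠ 0 := by linarith
    have ha2 : (1 + a) ≠ 0 := by linarith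
    have e1 := (Real.hasDerivAt_rpow_const (p := 1 - a) (Or.inl hs.ne')).div_const (1 - a)
    have e2 := (Real.hasDerivAt_rpow_const (p := 1 + a) (Or.inl hs.ne')).div_const (1 + a)
    have e3 := (hasDerivAt_id s).const_mul 2
    refine (((e1.add e2).add e3).const_mul K).congr_deriv ?_
    rw [show 1 - a - 1 = -a by ring, show 1 + a - 1 = a by ring]
    field_simp
  · intro s hs
    have b1 := bound m s rfl hs
    have b2 := bound (-m) s (norm_neg m) hs
    rw [neg_neg, show -m.re = -a from rfl] at *
    simp only [neg_re, neg_neg, ← ha] at b2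
    have c1 := real_inner_le_norm (p s) (-k * D m s)
    have c2 := real_inner_le_norm (r s) (-k * D (-m) s)
    have d1 : ‖p s‖ * ‖-k * D m s‖ ≤ ‖p s‖ * (K * (s ^ (-a) * ‖r s‖ + ‖p s‖)) := by gcongr
    have d2 : ‖r s‖ * ‖-k * D (-m) s‖ ≤ ‖r s‖ * (K * (s ^ a * ‖p s‖ + ‖r s‖)) := by gcongr
    have hA : 0 ≤ K * (s ^ (-a) + s ^ a) := by positivity
    have hB := mul_nonneg hA (sq_nonneg (‖p s‖ - ‖r s‖))
    nlinarith

lemma intF_eq_serH (n : ℕ) : ∀ (m k : ℂ), 0 < k.re → (∀ n : ℤ, m ≠ (n : ℂ)) →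
    -1 < m.re → m.re < n + 1 → ∀ s : ℝ, 0 < s → intF m k s = serH m k s := by
  induction n with
  | zero =>
    intro m k hk hm h1 h2 s hs
    exact intF_eq_serH_base m k hk hm h1 (by simpa using h2) s hs
  | succ n ih =>
    intro m k hk hm h1 h2 s hs
    by_cases h3 : m.re < 1
    · exact intF_eq_serH_base m k hk hm h1 h3 s hs
    have hk0 : k ≠ 0 := by rintro rfl; simp at hk
    have hi := ih (m - 1) k hk (by simpa [sub_eq_add_neg] using int_shift hm (-1))
      (by simp; linarith) (by simp at h2 ⊢; linarith)
    have d1 := intF_hasDerivAt (m - 1) k hk s hs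
    have d2 := serH_hasDerivAt (m - 1) k hk0 s hs
    have d3 := d2.congr_of_eventuallyEq (f₁ := intF (m - 1) k) (by
      filter_upwards [Ioi_mem_nhds hs] with t ht
      exact hi t ht)
    have := d1.unique d3
    rw [sub_add_cancel] at this
    exact mul_left_cancel₀ (neg_ne_zero.2 hk0) this



lemma mul_ofReal_cpow (z c : ℂ) (hz : z ≠ 0) (x : ℝ) (hx : 0 < x) :
    (z * x) ^ c = z ^ c * (x : ℂ) ^ c := by
  have hx0 : (x : ℂ) ≠ 0 := by exact_mod_cast hx.ne'
  rw [mul_comm z, cpow_def_of_ne_zero (mul_ne_zero hx0 hz), cpow_def_of_ne_zero hx0,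
    cpow_def_of_ne_zero hz, Complex.log_ofReal_mul hx hz, ← Complex.exp_add,
    ← Complex.ofReal_log hx.le]
  congr 1
  ring

/-- the radial part of `𝓘_m(kx)` -/
noncomputable def uI (m k : ℂ) (x : ℝ) : ℂ :=
  (x : ℂ) ^ ((1 : ℂ) / 2 + m) * zeroF1reg (m + 1) (k ^ 2 * (x ^ 2 / 4 : ℝ))

lemma besselI1d_eq (m k : ℂ) (hk : k ≠ 0) (x : ℝ) (hx : 0 < x) :
    besselI1d m (k * x) = (Real.sqrt Real.pi : ℂ) * (k / 2) ^ ((1 : ℂ) / 2 + m) * uI m k x := by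
  rw [besselI1d, uI, show k * x / 2 = k / 2 * x by ring,
    mul_ofReal_cpow _ _ (div_ne_zero hk two_ne_zero) x hx]
  have : (k * x) ^ 2 / 4 = k ^ 2 * ((x ^ 2 / 4 : ℝ) : ℂ) := by push_cast; ring
  rw [this]
  ring

lemma zeroF1reg_sq_hasDerivAt (c k : ℂ) (x : ℝ) :
    HasDerivAt (fun x : ℝ => zeroF1reg c (k ^ 2 * (x ^ 2 / 4 : ℝ)))
      (zeroF1reg (c + 1) (k ^ 2 * (x ^ 2 / 4 : ℝ)) * k ^ 2 * (x / 2)) x := by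
  have e1 : HasDerivAt (fun x : ℝ => x ^ 2 / 4) (x / 2) x := by
    refine ((hasDerivAt_pow 2 x).div_const 4).congr_deriv ?_
    simp; ring
  have e2 := (zeroF1reg_comp_hasDerivAt c k (x ^ 2 / 4)).scomp x e1
  refine e2.congr_deriv ?_
  rw [real_smul]; push_cast; ring

lemma uI_large (m k : ℂ) (hk : 0 < k.re) :
    ∃ C : ℝ, 0 ≤ C ∧ ∀ x : ℝ, 1 ≤ x → ‖uI m k x‖ ≤ C * Real.exp (k.re * x) := by
  set μ : ℂ := 1 / 2 + m with hμ
  set v : ℝ → ℂ := fun x => (k / 2) * (x * (x : ℂ) ^ μ) *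
    zeroF1reg (m + 2) (k ^ 2 * (x ^ 2 / 4 : ℝ)) with hv
  set u : ℝ → ℂ := uI m k with hu
  have ud : ∀ x, 0 < x → HasDerivAt u (μ / x * u x + k * v x) x := by
    intro x hx
    have hx0 : (x : ℂ) ≠ 0 := by exact_mod_cast hx.ne'
    refine ((cpow_ofReal_hasDerivAt μ x hx).mul
      (zeroF1reg_sq_hasDerivAt (m + 1) k x)).congr_deriv ?_
    rw [show m + 1 + 1 = m + 2 by ring]
    simp only [hu, hv, uI, ← hμ]
    field_simp
    try ring
  have vd : ∀ x, 0 < x → HasDerivAt v (k * u x - μ / x * v x) x := by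
    intro x hx
    have hx0 : (x : ℂ) ≠ 0 := by exact_mod_cast hx.ne'
    have e0 : HasDerivAt (fun x : ℝ => (x : ℂ)) 1 x := by
      simpa using (hasDerivAt_id x).ofReal_comp
    refine (((e0.mul (cpow_ofReal_hasDerivAt μ x hx)).const_mul (k / 2)).mul
      (zeroF1reg_sq_hasDerivAt (m + 2) k x)).congr_deriv ?_
    have hc := zeroF1reg_contig (m + 1) (k ^ 2 * (x ^ 2 / 4 : ℝ))
    rw [show m + 1 + 1 = m + 2 by ring, show m + 1 + 2 = m + 3 by ring] at hc
    rw [show m + 2 + 1 = m + 3 by ring]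
    simp only [hu, hv, uI, ← hμ, hc, Pi.mul_apply]
    rw [show m = μ - 1 / 2 by rw [hμ]; ring]
    push_cast
    field_simp
    ring
  set P : ℝ → ℂ := fun x => u x + v x with hP
  set R : ℝ → ℂ := fun x => u x - v x with hR
  have Pd : ∀ x, 0 < x → HasDerivAt P (k * P x + μ / x * R x) x := by
    intro x hx
    refine ((ud x hx).add (vd x hx)).congr_deriv ?_
    simp only [hP, hR]; ring
  have Rd : ∀ x, 0 < x → HasDerivAt R (-k * R x + μ / x * P x) x := by
    intro x hx
    refine ((ud x hx).sub (vd x hx)).congr_deriv ?_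
    simp only [hP, hR]; ring
  set κ := k.re with hκ
  set c : ℝ := ‖μ‖ ^ 2 / κ with hc
  have hc0 : 0 ≤ c := by positivity
  have ed : ∀ x : ℝ, HasDerivAt (fun x : ℝ => Real.exp (-2 * κ * x))
      (Real.exp (-2 * κ * x) * (-2 * κ)) x := fun x => by
    simpa using ((hasDerivAt_id x).const_mul (-2 * κ)).exp
  have anti := gronwall_antitone (b := 0)
    (N := fun x => Real.exp (-2 * κ * x) * (‖P x‖ ^ 2 + ‖R x‖ ^ 2))
    (N' := fun x => Real.exp (-2 * κ * x) * (-2 * κ) * (‖P x‖ ^ 2 + ‖R x‖ ^ 2) +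
      Real.exp (-2 * κ * x) * (2 * inner ℝ (P x) (k * P x + μ / x * R x) +
        2 * inner ℝ (R x) (-k * R x + μ / x * P x)))
    (W := fun x => c * (-x⁻¹)) (w := fun x => c * (x ^ 2)⁻¹)
    (fun x hx => (ed x).mul ((Pd x hx).norm_sq.add (Rd x hx).norm_sq)) ?_ ?_
  · set C0 : ℝ := Real.exp (-2 * κ * 1) * (‖P 1‖ ^ 2 + ‖R 1‖ ^ 2) * Real.exp (-(c * (-1⁻¹)))
    refine ⟨Real.sqrt C0, Real.sqrt_nonneg _, fun x hx => ?_⟩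
    have hx0 : 0 < x := by linarith
    have h1 := anti (show (1 : ℝ) ∈ Ioi 0 by simp) (show x ∈ Ioi 0 from hx0) hx
    have h2 : Real.exp (-2 * κ * x) * (‖P x‖ ^ 2 + ‖R x‖ ^ 2) ≤ C0 := by
      refine le_trans ?_ h1
      refine le_mul_of_one_le_right (by positivity) (Real.one_le_exp ?_)
      have : 0 ≤ x⁻¹ := by positivity
      nlinarith
    have h3 : ‖u x‖ ^ 2 ≤ ‖P x‖ ^ 2 + ‖R x‖ ^ 2 := by
      have e : u x = (1 / 2 : ℂ) * (P x + R x) := by simp only [hP, hR]; ring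
      have e1 : ‖u x‖ ≤ 1 / 2 * (‖P x‖ + ‖R x‖) := by
        rw [e, norm_mul]
        have := norm_add_le (P x) (R x)
        have e2 : ‖(1 / 2 : ℂ)‖ = 1 / 2 := by simp
        rw [e2]; linarith
      have e3 := norm_nonneg (u x)
      nlinarith [sq_nonneg (‖P x‖ - ‖R x‖), sq_nonneg (‖P x‖ + ‖R x‖)]
    have h4 : ‖u x‖ ^ 2 ≤ C0 * Real.exp (κ * x) ^ 2 := by
      have e1 : Real.exp (-2 * κ * x) * Real.exp (κ * x) ^ 2 = 1 := by
        rw [← Real.exp_nat_mul, ← Real.exp_add, ← Real.exp_zero]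
        congr 1
        push_cast; ring
      calc ‖u x‖ ^ 2 ≤ ‖P x‖ ^ 2 + ‖R x‖ ^ 2 := h3
        _ = Real.exp (-2 * κ * x) * (‖P x‖ ^ 2 + ‖R x‖ ^ 2) * Real.exp (κ * x) ^ 2 := by
          linear_combination -(‖P x‖ ^ 2 + ‖R x‖ ^ 2) * e1
        _ ≤ _ := by gcongr
    have h5 := Real.sqrt_le_sqrt h4
    rw [Real.sqrt_sq (norm_nonneg _), Real.sqrt_mul (by positivity),
      Real.sqrt_sq (by positivity)] at h5
    exact h5
  · intro x hx
    refine ((hasDerivAt_inv hx.ne').neg.const_mul c).congr_deriv ?_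
    simp
  · intro x hx
    have i1 : ∀ z w : ℂ, inner ℝ z (w * z) = w.re * ‖z‖ ^ 2 := by
      intro z w
      rw [Complex.inner, ← Complex.normSq_eq_norm_sq, Complex.normSq_apply]
      simp; ring
    have i2 : ∀ y z : ℂ, inner ℝ y (μ / x * z) ≤ ‖μ‖ / x * (‖y‖ * ‖z‖) := by
      intro y z
      refine (real_inner_le_norm _ _).trans_eq ?_
      rw [norm_mul, norm_div, Complex.norm_real, Real.norm_of_nonneg hx.le]
      ring
    have j1 := i2 (P x) (R x)
    have j2 := i2 (R x) (P x)
    have E := Real.exp_pos (-2 * κ * x)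
    have main : (-2 * κ) * (‖P x‖ ^ 2 + ‖R x‖ ^ 2) +
      (2 * inner ℝ (P x) (k * P x + μ / x * R x) +
        2 * inner ℝ (R x) (-k * R x + μ / x * P x)) ≤
        c * (x ^ 2)⁻¹ * (‖P x‖ ^ 2 + ‖R x‖ ^ 2) := by
      rw [inner_add_right, inner_add_right, i1, i1, neg_re, ← hκ]
      have hsq : 0 ≤ κ * (2 * ‖R x‖ - ‖μ‖ / (κ * x) * ‖P x‖) ^ 2 := by positivity
      have e : κ * (2 * ‖R x‖ - ‖μ‖ / (κ * x) * ‖P x‖) ^ 2 =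
          4 * κ * ‖R x‖ ^ 2 - 4 * (‖μ‖ / x * (‖P x‖ * ‖R x‖)) + c * (x ^ 2)⁻¹ * ‖P x‖ ^ 2 := by
        rw [hc]; field_simp; ring
      have : 0 ≤ c * (x ^ 2)⁻¹ * ‖R x‖ ^ 2 := by positivity
      nlinarith
    have := mul_le_mul_of_nonneg_left main E.le
    nlinarith

lemma besselI1d_large (m k : ℂ) (hk : 0 < k.re) :
    ∃ C : ℝ, 0 ≤ C ∧ ∀ x : ℝ, 1 ≤ x → ‖besselI1d m (k * x)‖ ≤ C * Real.exp (k.re * x) := by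
  have hk0 : k ≠ 0 := by rintro rfl; simp at hk
  obtain ⟨C, hC, h⟩ := uI_large m k hk
  refine ⟨‖(Real.sqrt Real.pi : ℂ) * (k / 2) ^ ((1 : ℂ) / 2 + m)‖ * C, by positivity,
    fun x hx => ?_⟩
  rw [besselI1d_eq m k hk0 x (by linarith), norm_mul, mul_assoc]
  gcongr
  exact h x hx

lemma besselI1d_small (m k : ℂ) (hk : 0 < k.re) :
    ∃ C : ℝ, 0 ≤ C ∧ ∀ x : ℝ, 0 < x → x ≤ 1 → ‖besselI1d m (k * x)‖ ≤ C * x ^ (1 / 2 + m.re) := by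
  have hk0 : k ≠ 0 := by rintro rfl; simp at hk
  have hcont : Continuous fun x : ℝ => zeroF1reg (m + 1) (k ^ 2 * (x ^ 2 / 4 : ℝ)) :=
    (zeroF1reg_continuous _).comp (by fun_prop)
  obtain ⟨B, hB⟩ := (isCompact_Icc (a := (0 : ℝ)) (b := 1)).exists_bound_of_continuousOn
    hcont.continuousOn
  have hB0 : 0 ≤ B := (norm_nonneg _).trans (hB 0 (by simp))
  refine ⟨‖(Real.sqrt Real.pi : ℂ) * (k / 2) ^ ((1 : ℂ) / 2 + m)‖ * B, by positivity,
    fun x hx hx1 => ?_⟩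
  rw [besselI1d_eq m k hk0 x hx, norm_mul, mul_assoc]
  refine mul_le_mul_of_nonneg_left ?_ (norm_nonneg _)
  rw [uI, norm_mul, Complex.norm_cpow_eq_rpow_re_of_pos hx, mul_comm B]
  have : ((1 : ℂ) / 2 + m).re = 1 / 2 + m.re := by simp
  rw [this]
  gcongr
  exact hB x ⟨hx.le, hx1⟩

lemma macdonaldK1d_small (m k : ℂ) (hk : 0 < k.re) :
    ∃ C : ℝ, 0 ≤ C ∧ ∀ x : ℝ, 0 < x → x ≤ 1 →
      ‖macdonaldK1d m (k * x)‖ ≤ C * x ^ (1 / 2 - |m.re|) := by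
  obtain ⟨C1, h1, H1⟩ := besselI1d_small m k hk
  obtain ⟨C2, h2, H2⟩ := besselI1d_small (-m) k hk
  refine ⟨(C2 + C1) / ‖Complex.sin (Real.pi * m)‖, by positivity, fun x hx hx1 => ?_⟩
  rw [macdonaldK1d, norm_div, div_mul_eq_mul_div]
  gcongr
  refine (norm_sub_le _ _).trans ?_
  rw [add_mul]
  refine add_le_add ((H2 x hx hx1).trans ?_) ((H1 x hx hx1).trans ?_)
  · refine mul_le_mul_of_nonneg_left ?_ h2
    refine Real.rpow_le_rpow_of_exponent_ge hx hx1 ?_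
    rw [neg_re]
    linarith [le_abs_self m.re]
  · refine mul_le_mul_of_nonneg_left ?_ h1
    refine Real.rpow_le_rpow_of_exponent_ge hx hx1 ?_
    linarith [neg_abs_le m.re]

lemma macdonaldK1d_eq (m k : ℂ) (hk : 0 < k.re) (hm : ∀ n : ℤ, m ≠ (n : ℂ)) (hmre : -1 < m.re)
    (x : ℝ) (hx : 0 < x) :
    macdonaldK1d m (k * x) = (Real.sqrt Real.pi : ℂ) / Real.pi * k ^ ((1 : ℂ) / 2) *
      ((x / 2 : ℝ) : ℂ) ^ ((1 : ℂ) / 2) * ((x / 2 : ℝ) : ℂ) ^ m * intF m k (x ^ 2 / 4) := by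
  have hk0 : k ≠ 0 := by rintro rfl; simp at hk
  have hx2 : 0 < x / 2 := by positivity
  have hx20 : ((x / 2 : ℝ) : ℂ) ≠ 0 := by exact_mod_cast hx2.ne'
  obtain ⟨n, hn⟩ := exists_nat_gt m.re
  rw [intF_eq_serH n m k hk hm hmre (by linarith) (x ^ 2 / 4) (by positivity), serH,
    macdonaldK1d, besselI1d, besselI1d]
  have e1 : k * x / 2 = k * ((x / 2 : ℝ) : ℂ) := by push_cast; ring
  have e2 : (k * x) ^ 2 / 4 = k ^ 2 * ((x ^ 2 / 4 : ℝ) : ℂ) := by push_cast; ring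
  have e3 : ((x ^ 2 / 4 : ℝ) : ℂ) ^ (-m) = ((x / 2 : ℝ) : ℂ) ^ (-m) * ((x / 2 : ℝ) : ℂ) ^ (-m) := by
    rw [← mul_ofReal_cpow _ _ hx20 _ hx2]
    congr 1
    push_cast; ring
  have e4 : ((x / 2 : ℝ) : ℂ) ^ (-m) * ((x / 2 : ℝ) : ℂ) ^ m = 1 := by
    rw [← cpow_add _ _ hx20]; simp
  rw [e1, e2, mul_ofReal_cpow _ _ hk0 _ hx2, mul_ofReal_cpow _ _ hk0 _ hx2, e3,
    cpow_add _ _ hx20, cpow_add _ _ hx20, cpow_add _ _ hk0, cpow_add _ _ hk0]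
  have hpi : (Real.pi : ℂ) ≠ 0 := by exact_mod_cast Real.pi_ne_zero
  have hsin := sin_ne m hm
  generalize ((x / 2 : ℝ) : ℂ) ^ (-m) = A at *
  generalize ((x / 2 : ℝ) : ℂ) ^ m = B at *
  generalize Complex.sin (Real.pi * m) = S at *
  field_simp
  linear_combination (-(k ^ ((1 : ℂ) / 2)) * ((x / 2 : ℝ) : ℂ) ^ ((1 : ℂ) / 2) * k ^ (-m) * A *
    zeroF1reg (-m + 1) (k ^ 2 * ((x ^ 2 / 4 : ℝ) : ℂ))) * e4

lemma intF_large (m k : ℂ) (hk : 0 < k.re) :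
    ∃ C : ℝ, 0 ≤ C ∧ ∀ x : ℝ, 1 ≤ x →
      ‖intF m k (x ^ 2 / 4)‖ ≤ C * ((x / 2) ^ (-m.re) * x ^ (-(1 / 2) : ℝ) *
        Real.exp (-(k.re * x))) := by
  set a := m.re with ha
  set κ := k.re with hκ
  set J : ℝ → ℝ := fun t => Real.exp (-a * t - κ / 4 * t ^ 2) + Real.exp (-(-a) * t - κ / 4 * t ^ 2)
    with hJ
  have hJi : Integrable J := (integrable_exp_quad a (κ / 4) (by positivity)).add
    (integrable_exp_quad (-a) (κ / 4) (by positivity))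
  refine ⟨∫ t, J t, integral_nonneg fun t => by simp only [hJ, Pi.zero_apply]; positivity,
    fun x hx => ?_⟩
  have hx0 : 0 < x := by linarith
  have hx2 : 0 < x / 2 := by linarith
  have hsx : 0 < Real.sqrt x := Real.sqrt_pos.2 hx0
  have hsx1 : 1 ≤ Real.sqrt x := by rw [Real.one_le_sqrt]; exact hx
  rw [intF, ← integral_add_right_eq_self (kerE m k (x ^ 2 / 4)) (Real.log (x / 2))]
  have hpt : ∀ v : ℝ, ‖kerE m k (x ^ 2 / 4) (v + Real.log (x / 2))‖ ≤
      ((x / 2) ^ (-a) * Real.exp (-(κ * x))) * J (Real.sqrt x * v) := by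
    intro v
    rw [kerE_norm, ← ha, ← hκ]
    have e1 : Real.exp (v + Real.log (x / 2)) = x / 2 * Real.exp v := by
      rw [Real.exp_add, Real.exp_log hx2]; ring
    have e2 : x ^ 2 / 4 * Real.exp (-(v + Real.log (x / 2))) = x / 2 * Real.exp (-v) := by
      rw [neg_add, Real.exp_add, Real.exp_neg (Real.log (x / 2)), Real.exp_log hx2]
      field_simp; ring
    rw [e1, e2, Real.rpow_def_of_pos hx2, ← Real.exp_add]
    have h1 := exp_add_exp_neg_ge v
    have h2 : -a * (v + Real.log (x / 2)) - κ * (x / 2 * Real.exp v + x / 2 * Real.exp (-v)) ≤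
        (Real.log (x / 2) * -a + -(κ * x)) + (-a * v - κ / 4 * (Real.sqrt x * v) ^ 2) := by
      rw [mul_pow, Real.sq_sqrt hx0.le]
      have := mul_le_mul_of_nonneg_left h1 (show 0 ≤ κ * (x / 2) by positivity)
      nlinarith
    refine (Real.exp_le_exp.2 h2).trans ?_
    rw [Real.exp_add (Real.log (x / 2) * -a + -(κ * x))]
    gcongr
    simp only [hJ]
    have h3 : -a * v ≤ |a * (Real.sqrt x * v)| := by
      rw [show a * (Real.sqrt x * v) = Real.sqrt x * (a * v) by ring, abs_mul, abs_of_pos hsx]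
      have := neg_abs_le (a * v)
      nlinarith [abs_nonneg (a * v)]
    rcases abs_cases (a * (Real.sqrt x * v)) with ⟨h4, _⟩ | ⟨h4, _⟩
    · refine le_trans (Real.exp_le_exp.2 ?_) (le_add_of_nonneg_left (Real.exp_pos _).le)
      linarith
    · refine le_trans (Real.exp_le_exp.2 ?_) (le_add_of_nonneg_right (Real.exp_pos _).le)
      linarith
  have hint : Integrable fun v => ((x / 2) ^ (-a) * Real.exp (-(κ * x))) * J (Real.sqrt x * v) :=
    (hJi.comp_mul_left' hsx.ne').const_mul _
  refine (norm_integral_le_of_norm_le hint (Filter.Eventually.of_forall hpt)).trans_eq ?_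
  rw [integral_const_mul, Measure.integral_comp_mul_left J, abs_of_pos (inv_pos.2 hsx), smul_eq_mul,
    Real.rpow_neg hx0.le, ← Real.sqrt_eq_rpow]
  ring

lemma macdonaldK1d_large (m k : ℂ) (hk : 0 < k.re) (hm : ∀ n : ℤ, m ≠ (n : ℂ))
    (hmre : -1 < m.re) :
    ∃ C : ℝ, 0 ≤ C ∧ ∀ x : ℝ, 1 ≤ x →
      ‖macdonaldK1d m (k * x)‖ ≤ C * Real.exp (-(k.re * x)) := by
  obtain ⟨C, hC, h⟩ := intF_large m k hk
  refine ⟨‖(Real.sqrt Real.pi : ℂ) / Real.pi * k ^ ((1 : ℂ) / 2)‖ * C, by positivity,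
    fun x hx => ?_⟩
  have hx0 : 0 < x := by linarith
  have hx2 : 0 < x / 2 := by linarith
  rw [macdonaldK1d_eq m k hk hm hmre x hx0]
  rw [mul_assoc, mul_assoc, norm_mul, mul_assoc]
  refine mul_le_mul_of_nonneg_left ?_ (norm_nonneg _)
  rw [norm_mul, norm_mul, Complex.norm_cpow_eq_rpow_re_of_pos hx2,
    Complex.norm_cpow_eq_rpow_re_of_pos hx2]
  have e0 : ((1 : ℂ) / 2).re = 1 / 2 := by simp
  rw [e0]
  have e1 : (x / 2) ^ (1 / 2 : ℝ) ≤ x ^ (1 / 2 : ℝ) :=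
    Real.rpow_le_rpow hx2.le (by linarith) (by norm_num)
  have e2 : (x / 2) ^ m.re * (x / 2) ^ (-m.re) = 1 := by
    rw [← Real.rpow_add hx2]; simp
  have e3 : x ^ (1 / 2 : ℝ) * x ^ (-(1 / 2) : ℝ) = 1 := by
    rw [← Real.rpow_add hx0]; simp
  calc (x / 2) ^ (1 / 2 : ℝ) * ((x / 2) ^ m.re * ‖intF m k (x ^ 2 / 4)‖)
      ≤ x ^ (1 / 2 : ℝ) * ((x / 2) ^ m.re * (C * ((x / 2) ^ (-m.re) * x ^ (-(1 / 2) : ℝ) *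
        Real.exp (-(k.re * x))))) := by
        gcongr
        exact h x hx
    _ = C * ((x / 2) ^ m.re * (x / 2) ^ (-m.re)) * (x ^ (1 / 2 : ℝ) * x ^ (-(1 / 2) : ℝ)) *
        Real.exp (-(k.re * x)) := by ring
    _ = _ := by rw [e2, e3]; ring


lemma kernel_bound (m k : ℂ) (hm : ∀ n : ℤ, m ≠ (n : ℂ))
    (hmre : -1 < m.re) (hk : 0 < k.re) :
    ∃ C : ℝ, 0 ≤ C ∧ ∀ x y : ℝ, 0 < x → x ≤ y →
      ‖(1 / k) * besselI1d m (k * x) * macdonaldK1d m (k * y)‖ ≤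
      C * (((Ioc (0:ℝ) 1).indicator (fun t => t ^ (min (m.re + 1/2) 0)) x + Real.exp (-(k.re * x))) *
        ((Ioc (0:ℝ) 1).indicator (fun t => t ^ (min (m.re + 1/2) 0)) y + Real.exp (-(k.re * y)))
        + Real.exp (-(k.re * |x - y|))) := by
  obtain ⟨A1, hA1, I1⟩ := besselI1d_large m k hk
  obtain ⟨A2, hA2, I2⟩ := besselI1d_small m k hk
  obtain ⟨B1, hB1, K1⟩ := macdonaldK1d_large m k hk hm hmre
  obtain ⟨B2, hB2, K2⟩ := macdonaldK1d_small m k hk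
  set δ := min (m.re + 1/2) 0 with hδ
  have hδ0 : δ ≤ 0 := min_le_right _ _
  have hδ1 : δ ≤ m.re + 1/2 := min_le_left _ _
  set φ : ℝ → ℝ := (Ioc (0:ℝ) 1).indicator (fun t => t ^ δ) with hφ
  have hφ0 : ∀ x, 0 ≤ φ x := fun x => indicator_nonneg (fun t ht => Real.rpow_nonneg ht.1.le _) x
  have hφ1 : ∀ x, 0 < x → x ≤ 1 → φ x = x ^ δ := fun x h h' =>
    indicator_of_mem (show x ∈ Ioc (0:ℝ) 1 from ⟨h, h'⟩) _
  refine ⟨‖1 / k‖ * ((A1 + A2) * (B1 + B2)), by positivity, fun x y hx hxy => ?_⟩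
  have hy : 0 < y := hx.trans_le hxy
  rw [norm_mul, norm_mul, mul_assoc, mul_assoc]
  refine mul_le_mul_of_nonneg_left ?_ (norm_nonneg _)
  have ex := Real.exp_pos (-(k.re * x))
  have ey := Real.exp_pos (-(k.re * y))
  have exy := Real.exp_pos (-(k.re * |x - y|))
  have key : ∀ A B p q R : ℝ, 0 ≤ A → 0 ≤ B → A ≤ A1 + A2 → B ≤ B1 + B2 → 0 ≤ p → 0 ≤ q →
      ‖besselI1d m (k * x)‖ ≤ A * p → ‖macdonaldK1d m (k * y)‖ ≤ B * q → p * q ≤ R →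
      ‖besselI1d m (k * x)‖ * ‖macdonaldK1d m (k * y)‖ ≤ (A1 + A2) * (B1 + B2) * R := by
    intro A B p q R hA hB hA' hB' hp hq h1 h2 h3
    calc _ ≤ (A * p) * (B * q) := by gcongr
      _ = A * B * (p * q) := by ring
      _ ≤ _ := by gcongr
  rcases le_total y 1 with hy1 | hy1
  · have hx1 := hxy.trans hy1
    refine key A2 B2 _ _ _ hA2 hB2 (by linarith) (by linarith) (by positivity) (by positivity)
      (I2 x hx hx1) (K2 y hy hy1) ?_
    rw [hφ1 x hx hx1, hφ1 y hy hy1]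
    have h1 : x ^ (1 / 2 + m.re) * y ^ (1 / 2 - |m.re|) ≤ x ^ δ * y ^ δ := by
      rcases le_total 0 m.re with h | h
      · rw [abs_of_nonneg h]
        calc x ^ (1 / 2 + m.re) * y ^ (1 / 2 - m.re)
            ≤ y ^ (1 / 2 + m.re) * y ^ (1 / 2 - m.re) := by
              gcongr
          _ = y := by rw [← Real.rpow_add hy]; ring_nf; simp
          _ ≤ 1 * 1 := by linarith
          _ ≤ _ := by
            gcongr
            · exact Real.one_le_rpow_of_pos_of_le_one_of_nonpos hx hx1 hδ0
            · exact Real.one_le_rpow_of_pos_of_le_one_of_nonpos hy hy1 hδ0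
      · rw [abs_of_nonpos h]
        gcongr ?_ * ?_
        · exact Real.rpow_le_rpow_of_exponent_ge hx hx1 (by linarith)
        · exact Real.rpow_le_rpow_of_exponent_ge hy hy1 (by linarith)
    have : 0 < x ^ δ := by positivity
    have : 0 < y ^ δ := by positivity
    nlinarith [mul_pos ex ey]
  · rcases le_total x 1 with hx1 | hx1
    · refine key A2 B1 _ _ _ hA2 hB1 (by linarith) (by linarith) (by positivity) (by positivity)
        (I2 x hx hx1) (K1 y hy1) ?_
      have h1 : x ^ (1 / 2 + m.re) ≤ x ^ δ :=
        Real.rpow_le_rpow_of_exponent_ge hx hx1 (by linarith)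
      rw [hφ1 x hx hx1]
      have : 0 < x ^ δ := by positivity
      have := hφ0 y
      calc x ^ (1 / 2 + m.re) * Real.exp (-(k.re * y)) ≤ x ^ δ * Real.exp (-(k.re * y)) := by gcongr
        _ ≤ (x ^ δ + Real.exp (-(k.re * x))) * (φ y + Real.exp (-(k.re * y))) := by
          gcongr <;> linarith
        _ ≤ _ := by linarith
    · refine key A1 B1 _ _ _ hA1 hB1 (by linarith) (by linarith) (by positivity) (by positivity)
        (I1 x hx1) (K1 y hy1) ?_
      rw [← Real.exp_add, abs_sub_comm, abs_of_nonneg (sub_nonneg.2 hxy)]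
      have h1 := hφ0 x
      have h2 := hφ0 y
      have : 0 ≤ (φ x + Real.exp (-(k.re * x))) * (φ y + Real.exp (-(k.re * y))) := by positivity
      have e : k.re * x + -(k.re * y) = -(k.re * (y - x)) := by ring
      rw [e]
      linarith

lemma phi_memLp (δ κ : ℝ) (hδ : -(1 / 2) < δ) (hκ : 0 < κ) :
    MemLp (fun x : ℝ => (Ioc (0:ℝ) 1).indicator (fun t => t ^ δ) x + Real.exp (-(κ * x))) 2
      (volume.restrict (Ioi (0 : ℝ))) := by
  refine MemLp.add ?_ ?_
  · have hmeas : Measurable ((Ioc (0:ℝ) 1).indicator (fun t : ℝ => t ^ δ)) :=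
      (by fun_prop : Measurable fun t : ℝ => t ^ δ).indicator measurableSet_Ioc
    rw [memLp_two_iff_integrable_sq hmeas.aestronglyMeasurable]
    have h1 : IntegrableOn (fun t : ℝ => t ^ (2 * δ)) (Ioc 0 1) := by
      rw [← intervalIntegrable_iff_integrableOn_Ioc_of_le zero_le_one]
      exact intervalIntegral.intervalIntegrable_rpow' (by linarith)
    have h2 := (integrable_indicator_iff measurableSet_Ioc).2 h1
    refine (h2.congr (Filter.Eventually.of_forall fun x => ?_)).integrableOn
    by_cases hx : x ∈ Ioc (0:ℝ) 1
    · simp only [indicator_of_mem hx]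
      rw [← Real.rpow_natCast, ← Real.rpow_mul hx.1.le]
      norm_num [mul_comm]
    · simp [indicator_of_notMem hx]
  · rw [memLp_two_iff_integrable_sq (by fun_prop)]
    have := integrableOn_exp_mul_Ioi (a := -(2 * κ)) (by linarith) 0
    refine Integrable.congr this (Filter.Eventually.of_forall fun x => ?_)
    simp only
    rw [← Real.exp_nat_mul]
    congr 1
    push_cast; ring
open ENNReal in
lemma lintegral_cs {α : Type*} [MeasurableSpace α] (μ : Measure α) {u v : α → ℝ≥0∞}
    (hu : AEMeasurable u μ) (hv : AEMeasurable v μ) :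
    ∫⁻ a, u a * v a ∂μ ≤ (∫⁻ a, u a ^ 2 ∂μ) ^ ((1:ℝ)/2) * (∫⁻ a, v a ^ 2 ∂μ) ^ ((1:ℝ)/2) := by
  have := ENNReal.lintegral_mul_le_Lp_mul_Lq μ Real.HolderConjugate.two_two hu hv
  simpa using this

lemma eLpNorm_two_eq {α E : Type*} [MeasurableSpace α] [NormedAddCommGroup E] (μ : Measure α)
    (f : α → E) :
    eLpNorm f 2 μ = (∫⁻ a, ‖f a‖ₑ ^ 2 ∂μ) ^ ((1:ℝ)/2) := by
  rw [eLpNorm_eq_lintegral_rpow_enorm_toReal (by norm_num) (by norm_num)]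
  simp

lemma lintegral_exp_abs (κ : ℝ) (hκ : 0 < κ) :
    ∃ M : NNReal, ∀ x : ℝ, ∫⁻ y in Ioi (0:ℝ), ENNReal.ofReal (Real.exp (-(κ * |x - y|))) ≤ M := by
  have hi : Integrable fun t : ℝ => Real.exp (-(κ * |t|)) := by
    rw [← integrableOn_univ, ← Iic_union_Ioi (a := (0:ℝ))]
    refine IntegrableOn.union ?_ ?_
    · refine (integrableOn_exp_mul_Iic hκ 0).congr_fun (fun t ht => ?_) measurableSet_Iic
      simp only [abs_of_nonpos (mem_Iic.1 ht), mul_neg, neg_neg]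
    · refine (integrableOn_exp_mul_Ioi (a := -κ) (by linarith) 0).congr_fun (fun t ht => ?_)
        measurableSet_Ioi
      simp only [abs_of_pos (mem_Ioi.1 ht), neg_mul]
  refine ⟨(∫⁻ t : ℝ, ENNReal.ofReal (Real.exp (-(κ * |t|)))).toNNReal, fun x => ?_⟩
  rw [ENNReal.coe_toNNReal hi.lintegral_lt_top.ne]
  refine (lintegral_mono' Measure.restrict_le_self le_rfl).trans ?_
  rw [lintegral_sub_left_eq_self (fun t : ℝ => ENNReal.ofReal (Real.exp (-(κ * |t|)))) x]


open ENNReal in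
lemma schur_bound (μ : Measure ℝ) [SFinite μ] (E : ℝ → ℝ → ℝ≥0∞)
    (hE : Measurable (Function.uncurry E)) (hs : ∀ x y, E x y = E y x) (M : ℝ≥0∞)
    (hM : ∀ x, ∫⁻ y, E x y ∂μ ≤ M) (u v : ℝ → ℝ≥0∞) (hu : AEMeasurable u μ)
    (hv : AEMeasurable v μ) :
    ∫⁻ x, u x * ∫⁻ y, E x y * v y ∂μ ∂μ ≤
      M * (∫⁻ x, u x ^ 2 ∂μ) ^ ((1:ℝ)/2) * (∫⁻ x, v x ^ 2 ∂μ) ^ ((1:ℝ)/2) := by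
  have hEx : ∀ x, Measurable (E x) := fun x => hE.comp (by fun_prop : Measurable fun y => (x, y))
  have hsq : ∀ a : ℝ≥0∞, (a ^ ((1:ℝ)/2)) ^ 2 = a := fun a => by
    rw [← ENNReal.rpow_natCast, ← ENNReal.rpow_mul]; norm_num
  have hin : ∀ x, ∫⁻ y, E x y * v y ∂μ ≤
      M ^ ((1:ℝ)/2) * (∫⁻ y, E x y * v y ^ 2 ∂μ) ^ ((1:ℝ)/2) := by
    intro x
    have h1 : ∀ y, E x y * v y = E x y ^ ((1:ℝ)/2) * (E x y ^ ((1:ℝ)/2) * v y) := fun y => by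
      rw [← mul_assoc, ← pow_two, hsq]
    simp_rw [h1]
    refine (lintegral_cs μ ((hEx x).pow_const _).aemeasurable
      (((hEx x).pow_const _).aemeasurable.mul hv)).trans ?_
    simp only [Pi.mul_apply, mul_pow, hsq]
    gcongr
    exact hM x
  have hprod : AEMeasurable (fun p : ℝ × ℝ => E p.1 p.2 * v p.2 ^ 2) (μ.prod μ) :=
    (show AEMeasurable (fun p : ℝ × ℝ => E p.1 p.2) (μ.prod μ) from hE.aemeasurable).mul
      (hv.comp_snd.pow_const 2)
  have hH : AEMeasurable (fun x => (∫⁻ y, E x y * v y ^ 2 ∂μ) ^ ((1:ℝ)/2)) μ :=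
    (hprod.lintegral_prod_right').pow_const _
  calc ∫⁻ x, u x * ∫⁻ y, E x y * v y ∂μ ∂μ
      ≤ ∫⁻ x, M ^ ((1:ℝ)/2) * u x * (∫⁻ y, E x y * v y ^ 2 ∂μ) ^ ((1:ℝ)/2) ∂μ := by
        refine lintegral_mono fun x => ?_
        rw [mul_comm (M ^ _), mul_assoc]
        gcongr
        exact hin x
    _ ≤ (∫⁻ x, (M ^ ((1:ℝ)/2) * u x) ^ 2 ∂μ) ^ ((1:ℝ)/2) *
        (∫⁻ x, ((∫⁻ y, E x y * v y ^ 2 ∂μ) ^ ((1:ℝ)/2)) ^ 2 ∂μ) ^ ((1:ℝ)/2) :=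
        lintegral_cs μ (hu.const_mul _) hH
    _ ≤ (M * ∫⁻ x, u x ^ 2 ∂μ) ^ ((1:ℝ)/2) * (M * ∫⁻ x, v x ^ 2 ∂μ) ^ ((1:ℝ)/2) := by
        simp_rw [mul_pow, hsq]
        rw [lintegral_const_mul'' _ (hu.pow_const 2)]
        gcongr
        rw [lintegral_lintegral_swap hprod, ← lintegral_const_mul'' _ (hv.pow_const 2)]
        refine lintegral_mono fun y => ?_
        simp_rw [hs _ y]
        rw [lintegral_mul_const _ (hEx y)]
        gcongr
        exact hM y
    _ = _ := by
        rw [ENNReal.mul_rpow_of_nonneg _ _ (by norm_num), ENNReal.mul_rpow_of_nonneg _ _ (by norm_num)]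
        calc _ = (M ^ ((1:ℝ)/2)) ^ 2 * (∫⁻ x, u x ^ 2 ∂μ) ^ ((1:ℝ)/2) *
              (∫⁻ x, v x ^ 2 ∂μ) ^ ((1:ℝ)/2) := by ring
          _ = _ := by rw [hsq]

/-- the Bessel resolvent kernel
`G(x,y) = k⁻¹ 𝓘_m(k min(x,y)) 𝓚_m(k max(x,y))` defines a bounded integral operator on
`L²(]0,∞[)`. -/
theorem bessel_resolvent_kernel_bounded (m k : ℂ) (hm : ∀ n : ℤ, m ≠ (n : ℂ))
    (hmre : -1 < m.re) (hk : 0 < k.re)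
    (G : ℝ → ℝ → ℂ)
    (hG : ∀ x y : ℝ, G x y =
      (1 / k) * besselI1d m (k * min x y) * macdonaldK1d m (k * max x y)) :
    ∃ C : ℝ, 0 ≤ C ∧ ∀ f g : ℝ → ℂ,
      MemLp f 2 (volume.restrict (Ioi (0 : ℝ))) →
      MemLp g 2 (volume.restrict (Ioi (0 : ℝ))) →
      (∫ x in Ioi (0 : ℝ), ∫ y in Ioi (0 : ℝ), ‖f x‖ * ‖G x y‖ * ‖g y‖) ≤
        C * (eLpNorm f 2 (volume.restrict (Ioi (0 : ℝ)))).toReal *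
          (eLpNorm g 2 (volume.restrict (Ioi (0 : ℝ)))).toReal := by
  obtain ⟨C, hC, hker⟩ := kernel_bound m k hm hmre hk
  obtain ⟨M, hM⟩ := lintegral_exp_abs k.re hk
  have hφ := phi_memLp (min (m.re + 1/2) 0) k.re
    (lt_min (by linarith) (by norm_num)) hk
  set φ : ℝ → ℝ := fun x => (Ioc (0:ℝ) 1).indicator (fun t => t ^ (min (m.re + 1/2) 0)) x +
    Real.exp (-(k.re * x)) with hφdef
  have hφ0 : ∀ x, 0 ≤ φ x := fun x => add_nonneg
    (indicator_nonneg (fun t ht => Real.rpow_nonneg ht.1.le _) x) (Real.exp_pos _).le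
  set μ := volume.restrict (Ioi (0 : ℝ)) with hμ
  have hGb : ∀ x y, 0 < x → 0 < y →
      ‖G x y‖ ≤ C * (φ x * φ y + Real.exp (-(k.re * |x - y|))) := by
    intro x y hx hy
    rw [hG]
    rcases le_total x y with h | h
    · rw [min_eq_left h, max_eq_right h]
      exact hker x y hx h
    · rw [min_eq_right h, max_eq_left h, mul_comm (φ x), abs_sub_comm]
      exact hker y x hy h
  set E : ℝ → ℝ → ENNReal := fun x y => ENNReal.ofReal (Real.exp (-(k.re * |x - y|))) with hE
  have hEm : Measurable (Function.uncurry E) := by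
    simp only [hE, Function.uncurry_def]
    fun_prop
  have hGe : ∀ x y, 0 < x → 0 < y →
      ‖G x y‖ₑ ≤ ENNReal.ofReal C * (‖φ x‖ₑ * ‖φ y‖ₑ + E x y) := by
    intro x y hx hy
    rw [Real.enorm_of_nonneg (hφ0 x), Real.enorm_of_nonneg (hφ0 y), ← ENNReal.ofReal_mul (hφ0 x),
      ← ENNReal.ofReal_add (mul_nonneg (hφ0 x) (hφ0 y)) (Real.exp_pos _).le,
      ← ENNReal.ofReal_mul hC, ← ofReal_norm]
    exact ENNReal.ofReal_le_ofReal (hGb x y hx hy)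
  set K : ENNReal := ENNReal.ofReal C * (eLpNorm φ 2 μ * eLpNorm φ 2 μ + M) with hK
  have hKt : K ≠ ⊤ := ENNReal.mul_ne_top ENNReal.ofReal_ne_top
    (ENNReal.add_ne_top.2 ⟨ENNReal.mul_ne_top hφ.2.ne hφ.2.ne, ENNReal.coe_ne_top⟩)
  refine ⟨K.toReal, ENNReal.toReal_nonneg, fun f g hf hg => ?_⟩
  rw [← ENNReal.toReal_mul, ← ENNReal.toReal_mul]
  refine (le_abs_self _).trans ?_
  rw [← Real.norm_eq_abs, ← toReal_enorm]
  refine ENNReal.toReal_mono (ENNReal.mul_ne_top (ENNReal.mul_ne_top hKt hf.2.ne) hg.2.ne) ?_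
  have hfm : AEMeasurable (fun x => ‖f x‖ₑ) μ := hf.1.enorm
  have hgm : AEMeasurable (fun x => ‖g x‖ₑ) μ := hg.1.enorm
  have hφm : AEMeasurable (fun x => ‖φ x‖ₑ) μ := hφ.1.enorm
  have hφg : AEMeasurable (fun x => ‖φ x‖ₑ * ‖g x‖ₑ) μ := hφm.mul hgm
  have hfφ : AEMeasurable (fun x => ‖f x‖ₑ * ‖φ x‖ₑ) μ := hfm.mul hφm
  have hmem : ∀ᵐ x ∂μ, 0 < x := ae_restrict_mem measurableSet_Ioi
  calc ‖∫ x, ∫ y, ‖f x‖ * ‖G x y‖ * ‖g y‖ ∂μ ∂μ‖ₑ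
      ≤ ∫⁻ x, ‖∫ y, ‖f x‖ * ‖G x y‖ * ‖g y‖ ∂μ‖ₑ ∂μ := enorm_integral_le_lintegral_enorm _
    _ ≤ ∫⁻ x, ENNReal.ofReal C * (‖f x‖ₑ * ‖φ x‖ₑ * (∫⁻ y, ‖φ y‖ₑ * ‖g y‖ₑ ∂μ) +
          ‖f x‖ₑ * ∫⁻ y, E x y * ‖g y‖ₑ ∂μ) ∂μ := by
        refine lintegral_mono_ae (hmem.mono fun x hx => ?_)
        refine (enorm_integral_le_lintegral_enorm _).trans ?_
        calc ∫⁻ y, ‖‖f x‖ * ‖G x y‖ * ‖g y‖‖ₑ ∂μ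
            ≤ ∫⁻ y, ENNReal.ofReal C * (‖f x‖ₑ * ‖φ x‖ₑ * (‖φ y‖ₑ * ‖g y‖ₑ) +
                ‖f x‖ₑ * (E x y * ‖g y‖ₑ)) ∂μ := by
              refine lintegral_mono_ae (hmem.mono fun y hy => ?_)
              rw [enorm_mul, enorm_mul, enorm_norm, enorm_norm, enorm_norm]
              calc ‖f x‖ₑ * ‖G x y‖ₑ * ‖g y‖ₑ
                  ≤ ‖f x‖ₑ * (ENNReal.ofReal C * (‖φ x‖ₑ * ‖φ y‖ₑ + E x y)) * ‖g y‖ₑ := by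
                    gcongr
                    exact hGe x y hx hy
                _ = _ := by ring
          _ = _ := by
              rw [lintegral_const_mul' _ _ ENNReal.ofReal_ne_top,
                lintegral_add_left' (hφg.const_mul _),
                lintegral_const_mul'' _ hφg,
                lintegral_const_mul' _ _ enorm_ne_top]
    _ = ENNReal.ofReal C * ((∫⁻ x, ‖f x‖ₑ * ‖φ x‖ₑ ∂μ) * (∫⁻ y, ‖φ y‖ₑ * ‖g y‖ₑ ∂μ) +
          ∫⁻ x, ‖f x‖ₑ * ∫⁻ y, E x y * ‖g y‖ₑ ∂μ ∂μ) := by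
        rw [lintegral_const_mul' _ _ ENNReal.ofReal_ne_top,
          lintegral_add_left' (hfφ.mul_const _),
          lintegral_mul_const'' _ hfφ]
    _ ≤ ENNReal.ofReal C * ((eLpNorm f 2 μ * eLpNorm φ 2 μ) * (eLpNorm φ 2 μ * eLpNorm g 2 μ) +
          M * eLpNorm f 2 μ * eLpNorm g 2 μ) := by
        simp only [eLpNorm_two_eq]
        gcongr
        · exact lintegral_cs μ hfm hφm
        · exact lintegral_cs μ hφm hgm
        · exact schur_bound μ E hEm (fun x y => by simp only [hE, abs_sub_comm]) M hM _ _ hfm hgm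
    _ = K * eLpNorm f 2 μ * eLpNorm g 2 μ := by rw [hK]; ring
end

section
/- Boundedness of the resolvent of the Schrödinger operator with exponential potential: let m ∈ ℂ ∖ ℤ with Re(m) > 0 and k ∈ ℂ with Re(k) > 0. Define the kernel R(x,y) := I_m(k·e^{min(x,y)})·K_m(k·e^{max(x,y)}) for x, y ∈ ℝ. Then there exists C ≥ 0 such that for all square-integrable f, g : ℝ → ℂ one has ∫_ℝ ∫_ℝ |f(x)|·|R(x,y)|·|g(y)| dx dy ≤ C·‖f‖_{L²}·‖g‖_{L²}. -/
open Complex Set MeasureTheory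

/-- Modified Bessel function `I_m(z) = (z/2)^m ₀𝐅₁(m+1; z²/4)` (principal branch). -/
noncomputable def besselI2d (m z : ℂ) : ℂ :=
  (z / 2) ^ m * zeroF1reg (m + 1) (z ^ 2 / 4)

/-- Macdonald function `K_m(z) = (π/(2 sin(π m))) (I_{-m}(z) - I_m(z))` for `m ∉ ℤ`. -/
noncomputable def besselK2d (m z : ℂ) : ℂ :=
  (Real.pi : ℂ) / (2 * Complex.sin (Real.pi * m)) * (besselI2d (-m) z - besselI2d m z)

lemma aux_real_int0 {s b : ℝ} (hs : -1 < s) (hb : 0 < b) :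
    IntegrableOn (fun u : ℝ => u ^ s * Real.exp (-b * u)) (Ioi 0) := by
  have := integrableOn_rpow_mul_exp_neg_mul_rpow hs one_pos hb
  simpa using this

lemma aux_real_int1 (s : ℝ) {b : ℝ} (hb : 0 < b) :
    IntegrableOn (fun u : ℝ => u ^ s * Real.exp (-b * u)) (Ioi 1) := by
  have h0 : IntegrableOn (fun u : ℝ => u ^ (max s 0) * Real.exp (-b * u)) (Ioi 1) :=
    (aux_real_int0 (lt_of_lt_of_le (by norm_num) (le_max_right s 0)) hb).mono_set
      (Ioi_subset_Ioi zero_le_one)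
  refine Integrable.mono' h0 ?_ ?_
  · apply Measurable.aestronglyMeasurable
    fun_prop
  · filter_upwards [self_mem_ae_restrict measurableSet_Ioi] with u hu
    have hu1 : (1:ℝ) ≤ u := le_of_lt hu
    have hu0 : (0:ℝ) < u := by linarith
    rw [Real.norm_of_nonneg (by positivity)]
    gcongr
    exact le_max_left _ _

lemma aux_norm (ν a : ℂ) {u : ℝ} (hu : 0 < u) :
    ‖(u : ℂ) ^ ν * cexp (-a * u)‖ = u ^ ν.re * Real.exp (-a.re * u) := by
  rw [norm_mul, Complex.norm_cpow_eq_rpow_re_of_pos hu, Complex.norm_exp]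
  simp

lemma aux_meas (ν a : ℂ) : Measurable (fun u : ℝ => (u : ℂ) ^ ν * cexp (-a * u)) := by
  fun_prop

lemma aux_cint0 {ν a : ℂ} (hν : -1 < ν.re) (ha : 0 < a.re) :
    IntegrableOn (fun u : ℝ => (u : ℂ) ^ ν * cexp (-a * u)) (Ioi 0) := by
  refine Integrable.mono' (aux_real_int0 hν ha) (aux_meas ν a).aestronglyMeasurable ?_
  filter_upwards [self_mem_ae_restrict measurableSet_Ioi] with u hu
  rw [aux_norm ν a hu]

lemma aux_cint1 (ν : ℂ) {a : ℂ} (ha : 0 < a.re) :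
    IntegrableOn (fun u : ℝ => (u : ℂ) ^ ν * cexp (-a * u)) (Ioi 1) := by
  refine Integrable.mono' (aux_real_int1 ν.re ha) (aux_meas ν a).aestronglyMeasurable ?_
  filter_upwards [self_mem_ae_restrict measurableSet_Ioi] with u hu
  rw [aux_norm ν a (lt_trans one_pos hu)]

lemma aux_hasDeriv {ν a : ℂ} (hν : 0 < ν.re) (ha : 0 < a.re) :
    DifferentiableAt ℂ (fun a : ℂ => ∫ u in Ioi (0:ℝ), (u : ℂ) ^ (ν - 1) * cexp (-a * u)) a := by
  have h := hasDerivAt_integral_of_dominated_loc_of_deriv_le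
    (F := fun (a : ℂ) (u : ℝ) => (u : ℂ) ^ (ν - 1) * cexp (-a * u))
    (F' := fun (a : ℂ) (u : ℝ) => (u : ℂ) ^ (ν - 1) * (cexp (-a * u) * (-u)))
    (μ := volume.restrict (Ioi (0:ℝ))) (x₀ := a) (s := Metric.ball a (a.re / 2))
    (bound := fun u => u ^ ν.re * Real.exp (-(a.re / 2) * u))
    (Metric.ball_mem_nhds a (by linarith))
    (Filter.Eventually.of_forall fun b => (aux_meas _ b).aestronglyMeasurable)
    (aux_cint0 (by simpa using hν) ha)
    (by apply Measurable.aestronglyMeasurable; fun_prop)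
    ?_ ?_ ?_
  · exact h.2.differentiableAt
  · filter_upwards [self_mem_ae_restrict measurableSet_Ioi] with u hu b hb
    have hu : (0:ℝ) < u := hu
    have hb' : a.re / 2 ≤ b.re := by
      have h1 : ‖b - a‖ < a.re / 2 := by simpa [dist_eq_norm] using hb
      have h2 := (abs_le.1 (Complex.abs_re_le_norm (b - a))).1
      simp only [Complex.sub_re] at h2
      linarith
    rw [← mul_assoc, norm_mul, aux_norm _ _ hu, norm_neg, Complex.norm_real, Real.norm_of_nonneg hu.le]
    rw [mul_right_comm, ← Real.rpow_add_one hu.ne']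
    simp only [Complex.sub_re, Complex.one_re, sub_add_cancel]
    gcongr
  · exact aux_real_int0 (by linarith) (by linarith)
  · refine Filter.Eventually.of_forall fun u b _ => ?_
    have : HasDerivAt (fun b : ℂ => -b * u) (-u) b := by
      simpa using ((hasDerivAt_id b).neg.mul_const (u:ℂ))
    exact (this.cexp).const_mul _

lemma aux_gamma {ν a : ℂ} (hν : 0 < ν.re) (ha : 0 < a.re) :
    ∫ u in Ioi (0:ℝ), (u : ℂ) ^ (ν - 1) * cexp (-a * u) = a ^ (-ν) * Gamma ν := by
  let U : Set ℂ := {z | 0 < z.re}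
  have hUo : IsOpen U := isOpen_lt continuous_const Complex.continuous_re
  have hUc : IsPreconnected U := (convex_halfSpace_re_gt 0).isPreconnected
  have h1 : AnalyticOnNhd ℂ (fun a : ℂ => ∫ u in Ioi (0:ℝ), (u : ℂ) ^ (ν - 1) * cexp (-a * u)) U :=
    DifferentiableOn.analyticOnNhd (fun z hz => (aux_hasDeriv hν hz).differentiableWithinAt) hUo
  have h2 : AnalyticOnNhd ℂ (fun a : ℂ => a ^ (-ν) * Gamma ν) U := by
    refine DifferentiableOn.analyticOnNhd (fun z hz => ?_) hUo
    refine DifferentiableAt.differentiableWithinAt ?_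
    refine DifferentiableAt.mul_const ?_ _
    exact differentiableAt_id.cpow_const (Or.inl hz)
  refine h1.eqOn_of_preconnected_of_frequently_eq h2 hUc (z₀ := 1) (by simp [U]) ?_ ha
  have hr : ∀ r : ℝ, 0 < r → (∫ u in Ioi (0:ℝ), (u : ℂ) ^ (ν - 1) * cexp (-(r:ℂ) * u))
      = (r:ℂ) ^ (-ν) * Gamma ν := by
    intro r hr
    have := Complex.integral_cpow_mul_exp_neg_mul_Ioi hν hr
    rw [one_div, Complex.inv_cpow _ _ (by rw [Complex.arg_ofReal_of_nonneg hr.le]; exact Real.pi_pos.ne), ← Complex.cpow_neg] at this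
    rw [← this]
    simp
  have ht : Filter.Tendsto (fun n : ℕ => (((1 + 1 / ((n:ℝ) + 1) : ℝ)) : ℂ)) Filter.atTop (nhdsWithin 1 {1}ᶜ) := by
    rw [tendsto_nhdsWithin_iff]
    constructor
    · have := (tendsto_one_div_add_atTop_nhds_zero_nat (𝕜 := ℝ)).const_add 1
      have h3 := (Complex.continuous_ofReal.tendsto _).comp this
      simpa [Function.comp_def] using h3
    · refine Filter.Eventually.of_forall fun n => ?_
      simp only [mem_compl_iff, mem_singleton_iff]
      intro h
      have h4 : (1 + 1 / ((n:ℝ) + 1) : ℝ) = 1 := by exact_mod_cast h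
      have : 0 < 1 / ((n:ℝ) + 1) := by positivity
      linarith
  refine ht.frequently (Filter.Frequently.of_forall fun n => hr _ (by positivity))

lemma aux_exp_hasSum (z : ℂ) : HasSum (fun n : ℕ => z ^ n / (n.factorial : ℂ)) (cexp z) := by
  rw [Complex.exp_eq_exp_ℂ]
  exact NormedSpace.expSeries_div_hasSum_exp z

/-- upper incomplete Gamma-type integral -/
noncomputable def auxE (ν a : ℂ) : ℂ := ∫ u in Ioi (1:ℝ), (u : ℂ) ^ (ν - 1) * cexp (-a * u)

lemma aux_S_pos {ν : ℂ} (a : ℂ) (hν : 0 < ν.re) :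
    HasSum (fun n : ℕ => (-a) ^ n / (n.factorial : ℂ) * (1 / (n + ν)))
      (∫ u in Ioc (0:ℝ) 1, (u : ℂ) ^ (ν - 1) * cexp (-a * u)) := by
  have hi : ∀ n : ℕ, IntegrableOn (fun u : ℝ => (u : ℂ) ^ (ν + n - 1)) (Ioc 0 1) := by
    intro n
    rw [← intervalIntegrable_iff_integrableOn_Ioc_of_le zero_le_one]
    apply intervalIntegral.intervalIntegrable_cpow'
    simp
    positivity
  have hr : ∀ n : ℕ, ∫ u in Ioc (0:ℝ) 1, ‖(u : ℂ) ^ (ν + n - 1)‖ = 1 / (ν.re + n) := by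
    intro n
    have h1 : ∫ u in Ioc (0:ℝ) 1, ‖(u : ℂ) ^ (ν + n - 1)‖ = ∫ u in Ioc (0:ℝ) 1, u ^ (ν.re + n - 1) := by
      refine setIntegral_congr_fun measurableSet_Ioc fun u hu => ?_
      rw [Complex.norm_cpow_eq_rpow_re_of_pos hu.1]
      simp
    have hp : 0 < ν.re + n := by positivity
    rw [h1, ← intervalIntegral.integral_of_le zero_le_one, integral_rpow (Or.inl (by linarith))]
    simp [hp.ne']
  have hc : ∀ n : ℕ, ∫ u in Ioc (0:ℝ) 1, (u : ℂ) ^ (ν + n - 1) = 1 / (n + ν) := by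
    intro n
    have hp : 0 < ν.re + n := by positivity
    have hne : ν + n ≠ 0 := by
      intro h
      have := congrArg Complex.re h
      simp at this
      linarith
    rw [← intervalIntegral.integral_of_le zero_le_one, integral_cpow (Or.inl (by simp; linarith))]
    simp [hne, add_comm]
  have key := hasSum_integral_of_summable_integral_norm
    (μ := volume.restrict (Ioc (0:ℝ) 1))
    (F := fun (n : ℕ) (u : ℝ) => (-a) ^ n / (n.factorial : ℂ) * (u : ℂ) ^ (ν + n - 1))
    (fun n => (hi n).const_mul _) ?_
  · simp only [integral_const_mul, hc] at key
    convert! key using 1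
    refine setIntegral_congr_fun measurableSet_Ioc fun u hu => ?_
    have hu0 : (u:ℂ) ≠ 0 := by exact_mod_cast hu.1.ne'
    rw [← (aux_exp_hasSum (-a * u)).tsum_eq, ← tsum_mul_left]
    refine tsum_congr fun n => ?_
    rw [show ν + n - 1 = (ν - 1) + n by ring, Complex.cpow_add _ _ hu0, Complex.cpow_natCast, mul_pow]
    ring
  · simp only [norm_mul, integral_const_mul, hr]
    refine Summable.of_nonneg_of_le (fun n => by positivity) (fun n => ?_)
      ((aux_exp_hasSum (-a)).summable.norm.mul_right (1 / ν.re))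
    gcongr
    simp

lemma aux_E_rec {ν a : ℂ} (ha : 0 < a.re) :
    ν * auxE ν a = a * auxE (ν + 1) a - cexp (-a) := by
  have i1 := (aux_cint1 (ν - 1) ha).const_mul ν
  have i2 := (aux_cint1 ν ha).const_mul a
  have h := integral_Ioi_of_hasDerivAt_of_tendsto
    (f := fun u : ℝ => (u : ℂ) ^ ν * cexp (-a * u))
    (f' := fun u : ℝ => ν * ((u : ℂ) ^ (ν - 1) * cexp (-a * u)) - a * ((u : ℂ) ^ ν * cexp (-a * u)))
    (a := 1) (m := 0) ?_ ?_ (i1.sub i2) ?_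
  · rw [integral_sub i1 i2, integral_const_mul, integral_const_mul] at h
    simp only [auxE, add_sub_cancel_right]
    simp at h
    simp
    linear_combination h
  · refine ContinuousAt.continuousWithinAt ?_
    refine ContinuousAt.mul ?_ (by fun_prop)
    exact (Complex.continuousAt_ofReal_cpow_const 1 ν (Or.inr one_ne_zero))
  · intro u hu
    have hu : (1:ℝ) < u := hu
    have h1 : HasDerivAt (fun u : ℝ => (u : ℂ) ^ ν) (ν * (u:ℂ) ^ (ν - 1)) u := by
      have := (hasDerivAt_id (u:ℂ)).cpow_const (c := ν) (Or.inl (by simpa using by linarith))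
      simpa using this.comp_ofReal
    have h2 : HasDerivAt (fun u : ℝ => cexp (-a * u)) (cexp (-a * u) * (-a)) u := by
      have : HasDerivAt (fun b : ℂ => -a * b) (-a) (u:ℂ) := by
        simpa using ((hasDerivAt_id (u:ℂ)).const_mul (-a))
      exact this.cexp.comp_ofReal
    convert! h1.mul h2 using 1
    ring
  · rw [tendsto_zero_iff_norm_tendsto_zero]
    have := tendsto_rpow_mul_exp_neg_mul_atTop_nhds_zero ν.re a.re ha
    refine this.congr' ?_
    filter_upwards [Filter.eventually_gt_atTop 0] with u hu
    rw [aux_norm ν a hu]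

lemma aux_E_formula (N : ℕ) : ∀ {ν a : ℂ}, 0 < a.re → (∀ n : ℤ, ν ≠ n) → 0 < ν.re + N →
    HasSum (fun n : ℕ => (-a) ^ n / (n.factorial : ℂ) * (1 / (n + ν)))
      (a ^ (-ν) * Gamma ν - auxE ν a) := by
  induction N with
  | zero =>
    intro ν a ha hν hN
    have hp : 0 < ν.re := by simpa using hN
    have h := aux_S_pos a hp
    convert! h using 1
    have hi := aux_cint0 (ν := ν - 1) (by simpa using hp) ha
    rw [← aux_gamma hp ha, auxE, ← Ioc_union_Ioi_eq_Ioi (zero_le_one' ℝ), setIntegral_union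
      (Ioc_disjoint_Ioi le_rfl) measurableSet_Ioi (hi.mono_set Ioc_subset_Ioi_self)
      (hi.mono_set (Ioi_subset_Ioi zero_le_one))]
    ring
  | succ N ih =>
    intro ν a ha hν hN
    have hν0 : ν ≠ 0 := by simpa using hν 0
    have ha0 : a ≠ 0 := by rintro rfl; simp at ha
    have hnν : ∀ n : ℕ, (n:ℂ) + ν ≠ 0 := by
      intro n h
      apply hν (-(n:ℤ))
      push_cast
      linear_combination h
    have h1 := ih (ν := ν + 1) ha (fun n h => hν (n - 1) (by push_cast; linear_combination h))
      (by simp at hN ⊢; linarith)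
    have h2 := h1.mul_left (-a)
    have h3 : HasSum (fun n : ℕ => (n:ℂ) * ((-a) ^ n / (n.factorial : ℂ) * (1 / (n + ν))))
        (-a * (a ^ (-(ν+1)) * Gamma (ν+1) - auxE (ν+1) a)) := by
      rw [← hasSum_nat_add_iff' 1]
      simp only [Finset.range_one, Finset.sum_singleton, Nat.cast_zero, zero_mul, sub_zero]
      convert! h2 using 2 with n
      have := hnν (n+1)
      have h5 : (n:ℂ) + (ν + 1) ≠ 0 := by
        push_cast at this
        intro h; apply this; linear_combination h
      have hf : (n.factorial : ℂ) ≠ 0 := by exact_mod_cast n.factorial_ne_zero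
      have hn1 : (n:ℂ) + 1 ≠ 0 := by exact_mod_cast n.succ_ne_zero
      rw [Nat.factorial_succ]
      push_cast at this ⊢
      rw [show (n:ℂ) + 1 + ν = n + (ν + 1) by ring]
      field_simp
      ring
    have h4 := ((aux_exp_hasSum (-a)).sub h3).mul_left (1 / ν)
    convert! h4 using 1
    · funext n
      have := hnν n
      have hf : (n.factorial : ℂ) ≠ 0 := by exact_mod_cast n.factorial_ne_zero
      field_simp
      ring
    · have hr := aux_E_rec (ν := ν) ha
      rw [Complex.Gamma_add_one _ hν0, neg_add, Complex.cpow_add _ _ ha0, Complex.cpow_neg_one]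
      field_simp
      linear_combination (-1) * hr

/-- half of the Macdonald integral -/
noncomputable def auxQ (ν a : ℂ) : ℂ :=
  ∫ u in Ioi (1:ℝ), (u : ℂ) ^ (ν - 1) * cexp (-a * u) * cexp (-a / u)

lemma aux_Q_hasSum (ν : ℂ) {a : ℂ} (ha : 0 < a.re) :
    HasSum (fun j : ℕ => (-a) ^ j / (j.factorial : ℂ) * auxE (ν - j) a) (auxQ ν a) := by
  have key := hasSum_integral_of_summable_integral_norm
    (μ := volume.restrict (Ioi (1:ℝ)))
    (F := fun (j : ℕ) (u : ℝ) => (-a) ^ j / (j.factorial : ℂ) * ((u : ℂ) ^ (ν - j - 1) * cexp (-a * u)))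
    (fun n => (aux_cint1 _ ha).const_mul _) ?_
  · simp only [integral_const_mul] at key
    convert! key using 1
    refine setIntegral_congr_fun measurableSet_Ioi fun u hu => ?_
    have hu : (1:ℝ) < u := hu
    have hu0 : (u:ℂ) ≠ 0 := by exact_mod_cast (by linarith : u ≠ 0)
    rw [← (aux_exp_hasSum (-a / u)).tsum_eq, ← tsum_mul_left]
    refine tsum_congr fun n => ?_
    rw [show ν - n - 1 = (ν - 1) - n by ring, Complex.cpow_sub (ν - 1) n hu0, Complex.cpow_natCast, div_pow]
    field_simp
  · simp only [norm_mul _ (_ * _), integral_const_mul]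
    refine Summable.of_nonneg_of_le (fun n => by positivity) (fun n => ?_)
      ((aux_exp_hasSum (-a)).summable.norm.mul_right
        (∫ u in Ioi (1:ℝ), u ^ (ν.re - 1) * Real.exp (-a.re * u)))
    refine mul_le_mul_of_nonneg_left ?_ (norm_nonneg _)
    refine setIntegral_mono_on (aux_cint1 _ ha).norm (aux_real_int1 _ ha) measurableSet_Ioi ?_
    intro u hu
    have hu : (1:ℝ) < u := hu
    rw [aux_norm _ _ (by linarith)]
    gcongr
    · exact hu.le
    · simp

lemma aux_dist {ν : ℂ} (hν : ∀ n : ℤ, ν ≠ n) : ∃ M : ℝ, 0 ≤ M ∧ ∀ n : ℤ, ‖1 / ((n:ℂ) + ν)‖ ≤ M := by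
  have h1 : ν ∉ Set.range ((↑) : ℤ → ℂ) := by
    rintro ⟨n, hn⟩
    exact hν n hn.symm
  have h2 := (Complex.isClosed_range_intCast.notMem_iff_infDist_pos (Set.range_nonempty _)).1 h1
  refine ⟨1 / Metric.infDist ν (Set.range ((↑) : ℤ → ℂ)), by positivity, fun n => ?_⟩
  rw [norm_div, norm_one]
  refine one_div_le_one_div_of_le h2 ?_
  have := Metric.infDist_le_dist_of_mem (x := ν) (Set.mem_range_self (f := ((↑) : ℤ → ℂ)) (-n))
  rw [dist_eq_norm] at this
  convert! this using 2
  push_cast; ring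

/-- the double series -/
noncomputable def auxT (ν a : ℂ) (p : ℕ × ℕ) : ℂ :=
  (-a) ^ p.1 / (p.1.factorial : ℂ) * ((-a) ^ p.2 / (p.2.factorial : ℂ) * (1 / (p.2 + (ν - p.1))))

lemma aux_T_summable {ν : ℂ} (a : ℂ) (hν : ∀ n : ℤ, ν ≠ n) : Summable (auxT ν a) := by
  obtain ⟨M, hM0, hM⟩ := aux_dist hν
  have h1 := (aux_exp_hasSum (-a)).summable.norm
  have h2 := (h1.mul_of_nonneg h1 (fun _ => norm_nonneg _) (fun _ => norm_nonneg _)).mul_right M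
  refine Summable.of_norm_bounded h2 fun p => ?_
  rw [auxT, ← mul_assoc, norm_mul, norm_mul]
  gcongr
  have := hM ((p.2:ℤ) - p.1)
  convert! this using 3
  push_cast; ring

lemma aux_T_anti {m : ℂ} (a : ℂ) : ∑' p, auxT (-m) a p = - ∑' p, auxT m a p := by
  rw [← (Equiv.prodComm ℕ ℕ).tsum_eq (auxT (-m) a), ← tsum_neg]
  refine tsum_congr fun p => ?_
  simp only [auxT, Equiv.prodComm_apply, Prod.fst_swap, Prod.snd_swap]
  rw [show (p.1:ℂ) + (-m - p.2) = -(p.2 + (m - p.1)) by ring, one_div_neg_eq_neg_one_div]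
  ring

lemma aux_sub_int {ν : ℂ} (hν : ∀ n : ℤ, ν ≠ n) (j : ℕ) : ∀ n : ℤ, ν - j ≠ n :=
  fun n h => hν (n + j) (by push_cast; linear_combination h)

lemma aux_sin_ne {ν : ℂ} (hν : ∀ n : ℤ, ν ≠ n) : Complex.sin (Real.pi * ν) ≠ 0 := by
  rw [Complex.sin_ne_zero_iff]
  intro n h
  apply hν n
  have : (Real.pi : ℂ) ≠ 0 := by exact_mod_cast Real.pi_ne_zero
  rw [mul_comm] at h
  exact mul_right_cancel₀ this h

lemma sin_sub_nat_mul_pi' (x : ℂ) (j : ℕ) :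
    Complex.sin (x - j * Real.pi) = (-1) ^ j * Complex.sin x := by
  induction j with
  | zero => simp
  | succ j ih =>
    rw [show x - ((j + 1 : ℕ) : ℂ) * Real.pi = (x - j * Real.pi) - Real.pi by push_cast; ring,
      Complex.sin_sub_pi, ih, pow_succ]
    ring

lemma aux_gamma_refl {ν : ℂ} (hν : ∀ n : ℤ, ν ≠ n) (j : ℕ) :
    (-1) ^ j * Gamma (ν - j) = Real.pi / Complex.sin (Real.pi * ν) * (1 / Gamma (-ν + 1 + j)) := by
  have h := Complex.Gamma_mul_Gamma_one_sub (ν - j)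
  have hG : Gamma (-ν + 1 + j) ≠ 0 := by
    apply Complex.Gamma_ne_zero
    intro n hn
    apply hν (n + 1 + j)
    push_cast
    linear_combination (-1) * hn
  have hs : Complex.sin (Real.pi * (ν - j)) = (-1) ^ j * Complex.sin (Real.pi * ν) := by
    rw [mul_sub, mul_comm (Real.pi : ℂ) (j : ℂ), sin_sub_nat_mul_pi']
  rw [show 1 - (ν - j) = -ν + 1 + j by ring, hs] at h
  have hs0 := aux_sin_ne hν
  have h1 : ((-1:ℂ) ^ j) * (-1) ^ j = 1 := by rw [← mul_pow]; simp
  have h2 : ((-1:ℂ) ^ j) ≠ 0 := by simp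
  field_simp
  field_simp at h
  linear_combination h

lemma aux_I_formula {ν a : ℂ} (hν : ∀ n : ℤ, ν ≠ n) (ha : 0 < a.re) :
    (Real.pi : ℂ) / Complex.sin (Real.pi * ν) * besselI2d (-ν) (2 * a)
      = auxQ ν a + ∑' p, auxT ν a p := by
  have ha0 : a ≠ 0 := by rintro rfl; simp at ha
  have hform : ∀ j : ℕ, HasSum (fun n : ℕ => auxT ν a (j, n))
      ((-a) ^ j / (j.factorial : ℂ) * (a ^ (-(ν - j)) * Gamma (ν - j) - auxE (ν - j) a)) := by
    intro j
    obtain ⟨N, hN⟩ := exists_nat_gt (-(ν - j).re)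
    have h0 := (aux_E_formula N ha (aux_sub_int hν j) (by linarith)).mul_left
      ((-a) ^ j / (j.factorial : ℂ))
    simpa only [auxT] using h0
  have h1 := (aux_T_summable a hν).hasSum.prod_fiberwise hform
  have h2 := (aux_Q_hasSum ν ha).add h1
  rw [← h2.tsum_eq, besselI2d, zeroF1reg, ← mul_assoc, ← tsum_mul_left]
  refine tsum_congr fun j => ?_
  have hr := aux_gamma_refl hν j
  rw [show -(ν - j) = -ν + j by ring, Complex.cpow_add _ _ ha0, Complex.cpow_natCast]
  rw [show 2 * a / 2 = a by ring, show (2 * a) ^ 2 / 4 = a * a by ring, mul_pow, neg_pow a j]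
  rw [← div_div, div_eq_mul_one_div _ (Gamma _)]
  linear_combination (-(a ^ (-ν) * (a ^ j * a ^ j / (j.factorial : ℂ)))) * hr

lemma aux_K_formula {m a : ℂ} (hm : ∀ n : ℤ, m ≠ n) (ha : 0 < a.re) :
    besselK2d m (2 * a) = (auxQ m a + auxQ (-m) a) / 2 := by
  have hm' : ∀ n : ℤ, -m ≠ n := fun n h => hm (-n) (by push_cast; linear_combination -h)
  have h1 := aux_I_formula hm ha
  have h2 := aux_I_formula hm' ha
  rw [neg_neg, mul_neg, Complex.sin_neg, div_neg, aux_T_anti] at h2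
  have hs := aux_sin_ne hm
  rw [besselK2d, ← div_div]
  linear_combination (h1 + h2) / 2

lemma aux_Q_norm {ν a : ℂ} {u : ℝ} (hu : 0 < u) :
    ‖(u : ℂ) ^ (ν - 1) * cexp (-a * u) * cexp (-a / u)‖
      = u ^ (ν.re - 1) * Real.exp (-a.re * u) * Real.exp (-a.re / u) := by
  rw [norm_mul, aux_norm _ _ hu, Complex.norm_exp]
  simp

lemma aux_Q_bound1 {ν a : ℂ} {μ : ℝ} (hμ : 0 < μ) (hν : ν.re ≤ μ) (ha : 0 < a.re) :
    ‖auxQ ν a‖ ≤ (1 / a.re) ^ μ * Real.Gamma μ := by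
  rw [← Real.integral_rpow_mul_exp_neg_mul_Ioi hμ ha]
  have hi0 := aux_real_int0 (s := μ - 1) (by linarith) ha
  have h1 : ‖auxQ ν a‖ ≤ ∫ u in Ioi (1:ℝ), u ^ (μ - 1) * Real.exp (-a.re * u) := by
    refine norm_integral_le_of_norm_le (hi0.mono_set (Ioi_subset_Ioi zero_le_one)) ?_
    filter_upwards [self_mem_ae_restrict measurableSet_Ioi] with u hu
    have hu : (1:ℝ) < u := hu
    have hu0 : 0 < u := by linarith
    rw [aux_Q_norm hu0]
    have h2 : Real.exp (-a.re / u) ≤ 1 := by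
      rw [Real.exp_le_one_iff, neg_div, neg_nonpos]
      positivity
    calc u ^ (ν.re - 1) * Real.exp (-a.re * u) * Real.exp (-a.re / u)
        ≤ u ^ (ν.re - 1) * Real.exp (-a.re * u) * 1 := by gcongr
      _ ≤ _ := by
        rw [mul_one]
        gcongr
        exact hu.le
  refine h1.trans ?_
  simp only [← neg_mul]
  refine setIntegral_mono_set hi0 ?_ (Ioi_subset_Ioi zero_le_one).eventuallyLE
  filter_upwards [self_mem_ae_restrict measurableSet_Ioi] with u hu
  have hu : (0:ℝ) < u := hu
  simp only [Pi.zero_apply]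
  positivity

lemma aux_Q_bound2 {ν a : ℂ} {μ b : ℝ} (hν : ν.re ≤ μ) (hb : 0 < b) (ha : b ≤ a.re) :
    ‖auxQ ν a‖ ≤ Real.exp (-2 * a.re) *
      (Real.exp (2 * b) * ∫ u in Ioi (1:ℝ), u ^ (μ - 1) * Real.exp (-b * u)) := by
  rw [← integral_const_mul, ← integral_const_mul]
  refine norm_integral_le_of_norm_le (((aux_real_int1 _ hb).const_mul _).const_mul _) ?_
  filter_upwards [self_mem_ae_restrict measurableSet_Ioi] with u hu
  have hu : (1:ℝ) < u := hu
  have hu0 : 0 < u := by linarith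
  rw [aux_Q_norm hu0]
  have h1 : u ^ (ν.re - 1) ≤ u ^ (μ - 1) := by
    gcongr
    exact hu.le
  have h2 : Real.exp (-a.re * u) * Real.exp (-a.re / u) ≤
      Real.exp (-2 * a.re) * Real.exp (2 * b) * Real.exp (-b * u) := by
    rw [← Real.exp_add, ← Real.exp_add, ← Real.exp_add, Real.exp_le_exp]
    have h3 : 0 ≤ u + 1 / u - 2 := by
      have : u + 1 / u - 2 = (u - 1) ^ 2 / u := by field_simp; ring
      rw [this]; positivity
    have h4 : 0 ≤ b * (1 / u) := by positivity
    have h5 := mul_nonneg (sub_nonneg.2 ha) h3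
    have h6 : -a.re / u = - a.re * (1 / u) := by ring
    rw [h6]
    nlinarith
  calc u ^ (ν.re - 1) * Real.exp (-a.re * u) * Real.exp (-a.re / u)
      = u ^ (ν.re - 1) * (Real.exp (-a.re * u) * Real.exp (-a.re / u)) := by ring
    _ ≤ u ^ (μ - 1) * (Real.exp (-2 * a.re) * Real.exp (2 * b) * Real.exp (-b * u)) := by gcongr
    _ = _ := by ring

lemma aux_K_bound {m k : ℂ} (hm : ∀ n : ℤ, m ≠ n) (hmre : 0 < m.re) (hk : 0 < k.re) :
    ∃ C : ℝ, 0 ≤ C ∧ ∀ r : ℝ, 0 < r → ‖besselK2d m (k * r)‖ ≤ C * r ^ (-m.re) ∧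
      (1 ≤ r → ‖besselK2d m (k * r)‖ ≤ C * Real.exp (-k.re * r)) := by
  set C1 : ℝ := (2 / k.re) ^ m.re * Real.Gamma m.re
  set C2 : ℝ := Real.exp (2 * (k.re / 2)) * ∫ u in Ioi (1:ℝ), u ^ (m.re - 1) * Real.exp (-(k.re / 2) * u)
  have hC1 : 0 ≤ C1 := by
    have := Real.Gamma_pos_of_pos hmre
    positivity
  have hK : ∀ r : ℝ, 0 < r → ‖besselK2d m (k * r)‖ ≤
      (‖auxQ m (k * r / 2)‖ + ‖auxQ (-m) (k * r / 2)‖) / 2 := by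
    intro r hr
    have : 0 < (k * r / 2).re := by simp; positivity
    have h := aux_K_formula hm this
    rw [show 2 * (k * r / 2) = k * r by ring] at h
    rw [h, norm_div]
    simp only [Complex.norm_ofNat]
    gcongr
    exact norm_add_le _ _
  refine ⟨max C1 C2, le_max_of_le_left hC1, fun r hr => ⟨?_, fun h1 => ?_⟩⟩
  · have hre : (k * r / 2).re = k.re * r / 2 := by simp
    have ha : 0 < (k * r / 2).re := by simp; positivity
    have e : (1 / (k * r / 2).re) ^ m.re * Real.Gamma m.re = C1 * r ^ (-m.re) := by
      rw [hre, show 1 / (k.re * r / 2) = 2 / k.re * r⁻¹ by field_simp, Real.mul_rpow (by positivity) (by positivity),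
        Real.inv_rpow hr.le, ← Real.rpow_neg hr.le]
      ring
    have b1 := aux_Q_bound1 hmre (le_refl m.re) ha
    have b2 := aux_Q_bound1 (ν := -m) hmre (by simp; linarith) ha
    rw [e] at b1 b2
    have h3 : C1 * r ^ (-m.re) ≤ max C1 C2 * r ^ (-m.re) := by
      gcongr
      exact le_max_left _ _
    linarith [hK r hr]
  · have hre : (k * r / 2).re = k.re * r / 2 := by simp
    have ha : k.re / 2 ≤ (k * r / 2).re := by
      rw [hre]
      nlinarith
    have b1 := aux_Q_bound2 (le_refl m.re) (half_pos hk) ha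
    have b2 := aux_Q_bound2 (ν := -m) (μ := m.re) (by simp; linarith) (half_pos hk) ha
    rw [show -2 * (k * r / 2).re = -k.re * r by rw [hre]; ring] at b1 b2
    have h3 : Real.exp (-k.re * r) * C2 ≤ Real.exp (-k.re * r) * max C1 C2 := by
      gcongr
      exact le_max_right _ _
    linarith [hK r hr]

lemma aux_pw {c μ x : ℝ} (hc : 0 < c) (hμ : 0 < μ) (hx : 0 ≤ x) :
    x ^ μ ≤ (μ / c) ^ μ * Real.exp (c * x) := by
  have h1 : x ≤ (μ / c) * Real.exp (c * x / μ) := by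
    have := Real.add_one_le_exp (c * x / μ)
    calc x = (μ / c) * (c * x / μ) := by field_simp
      _ ≤ _ := by gcongr; linarith
  calc x ^ μ ≤ ((μ / c) * Real.exp (c * x / μ)) ^ μ := by gcongr
    _ = _ := by
      rw [Real.mul_rpow (by positivity) (by positivity), ← Real.exp_mul]
      congr 2
      field_simp

lemma aux_beta_norm (v : ℂ) {u : ℝ} (hu : u ∈ Ioo (0:ℝ) 1) :
    ‖(u : ℂ) ^ ((1 / 2 : ℂ) - 1) * (1 - (u:ℂ)) ^ (v + 1 / 2 - 1)‖
      = u ^ (-(1 / 2) : ℝ) * (1 - u) ^ (v.re - 1 / 2) := by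
  have h1 : 0 < 1 - u := by linarith [hu.2]
  rw [norm_mul, Complex.norm_cpow_eq_rpow_re_of_pos hu.1,
    show (1 - (u:ℂ)) = ((1 - u : ℝ) : ℂ) by push_cast; rfl, Complex.norm_cpow_eq_rpow_re_of_pos h1]
  congr 2
  · norm_num
  · simp; ring

lemma aux_beta_cint (n : ℕ) {v : ℂ} (hv : -(1/2) < v.re) :
    IntegrableOn (fun u : ℝ => (u : ℂ) ^ ((n:ℂ) + 1 / 2 - 1) * (1 - (u:ℂ)) ^ (v + 1 / 2 - 1)) (Ioo 0 1) := by
  have h := Complex.betaIntegral_convergent (u := (n:ℂ) + 1 / 2) (v := v + 1 / 2)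
    (by simp; positivity) (by simp; linarith)
  rwa [intervalIntegrable_iff_integrableOn_Ioo_of_le zero_le_one] at h

lemma aux_beta_cint0 {v : ℂ} (hv : -(1/2) < v.re) :
    IntegrableOn (fun u : ℝ => (u : ℂ) ^ ((1 / 2 : ℂ) - 1) * (1 - (u:ℂ)) ^ (v + 1 / 2 - 1)) (Ioo 0 1) := by
  have h := aux_beta_cint 0 hv
  simpa only [Nat.cast_zero, zero_add] using h

lemma aux_beta_rint {s : ℝ} (hs : -(1/2) < s) :
    IntegrableOn (fun u : ℝ => u ^ (-(1 / 2) : ℝ) * (1 - u) ^ (s - 1 / 2)) (Ioo 0 1) := by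
  refine (aux_beta_cint0 (v := (s:ℂ)) (by simpa using hs)).norm.congr ?_
  filter_upwards [self_mem_ae_restrict measurableSet_Ioo] with u hu
  rw [aux_beta_norm _ hu, Complex.ofReal_re]

/-- Poisson integral -/
noncomputable def auxP (m z : ℂ) : ℂ := ∫ u in Ioo (0:ℝ) 1,
  Complex.cosh (z * (Real.sqrt u : ℝ)) * ((u : ℂ) ^ ((1 / 2 : ℂ) - 1) * (1 - (u:ℂ)) ^ (m + 1 / 2 - 1))

lemma aux_P_hasSum {m : ℂ} (z : ℂ) (hm : 0 < m.re) :
    HasSum (fun n : ℕ => z ^ (2 * n) / ((2 * n).factorial : ℂ) *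
      Complex.betaIntegral ((n:ℂ) + 1 / 2) (m + 1 / 2)) (auxP m z) := by
  have hm' : -(1/2) < m.re := by linarith
  have hpow : ∀ (n : ℕ) (u : ℝ), u ∈ Ioo (0:ℝ) 1 →
      (u : ℂ) ^ ((n:ℂ) + 1 / 2 - 1) = (u:ℂ) ^ n * (u : ℂ) ^ ((1 / 2 : ℂ) - 1) := by
    intro n u hu
    have hu0 : (u:ℂ) ≠ 0 := by exact_mod_cast hu.1.ne'
    rw [add_sub_assoc, Complex.cpow_add _ _ hu0, Complex.cpow_natCast]
  have key := hasSum_integral_of_summable_integral_norm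
    (μ := volume.restrict (Ioo (0:ℝ) 1))
    (F := fun (n : ℕ) (u : ℝ) => z ^ (2 * n) / ((2 * n).factorial : ℂ) *
      ((u : ℂ) ^ ((n:ℂ) + 1 / 2 - 1) * (1 - (u:ℂ)) ^ (m + 1 / 2 - 1)))
    (fun n => (aux_beta_cint n hm').const_mul _) ?_
  · simp only [integral_const_mul] at key
    convert! key using 1
    · funext n
      rw [Complex.betaIntegral, intervalIntegral.integral_of_le zero_le_one,
        integral_Ioc_eq_integral_Ioo]
    · refine setIntegral_congr_fun measurableSet_Ioo fun u hu => ?_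
      have hs : ((Real.sqrt u : ℝ) : ℂ) ^ 2 = u := by
        exact_mod_cast Real.sq_sqrt hu.1.le
      rw [← (Complex.hasSum_cosh (z * (Real.sqrt u : ℝ))).tsum_eq, ← tsum_mul_right]
      refine tsum_congr fun n => ?_
      rw [hpow n u hu, mul_pow, pow_mul ((Real.sqrt u : ℝ) : ℂ), hs]
      ring
  · simp only [norm_mul _ (_ * _), integral_const_mul]
    refine Summable.of_nonneg_of_le (fun n => by positivity) (fun n => ?_)
      ((Complex.hasSum_cosh z).summable.norm.mul_right
        (∫ u in Ioo (0:ℝ) 1, ‖(u : ℂ) ^ ((1 / 2 : ℂ) - 1) * (1 - (u:ℂ)) ^ (m + 1 / 2 - 1)‖))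
    refine mul_le_mul_of_nonneg_left ?_ (norm_nonneg _)
    refine setIntegral_mono_on (aux_beta_cint n hm').norm (aux_beta_cint0 hm').norm
      measurableSet_Ioo ?_
    intro u hu
    rw [hpow n u hu, mul_assoc, norm_mul]
    refine mul_le_of_le_one_left (norm_nonneg _) ?_
    rw [norm_pow, Complex.norm_real, Real.norm_of_nonneg hu.1.le]
    exact pow_le_one₀ hu.1.le hu.2.le

lemma aux_gamma_half (n : ℕ) : Gamma ((n:ℂ) + 1 / 2) * (n.factorial : ℂ) * 4 ^ n
    = ((2 * n).factorial : ℂ) * (Real.sqrt Real.pi : ℝ) := by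
  have h := Complex.Gamma_mul_Gamma_add_half ((n:ℂ) + 1 / 2)
  rw [show (n:ℂ) + 1 / 2 + 1 / 2 = n + 1 by ring, Complex.Gamma_nat_eq_factorial,
    show 2 * ((n:ℂ) + 1 / 2) = ((2 * n : ℕ) : ℂ) + 1 by push_cast; ring,
    Complex.Gamma_nat_eq_factorial,
    show (1:ℂ) - (((2 * n : ℕ) : ℂ) + 1) = -((2 * n : ℕ) : ℂ) by ring,
    Complex.cpow_neg, Complex.cpow_natCast, pow_mul] at h
  rw [h]
  norm_num
  field_simp

lemma aux_F_formula {m : ℂ} (z : ℂ) (hm : 0 < m.re) :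
    zeroF1reg (m + 1) (z ^ 2 / 4) =
      auxP m z / ((Real.sqrt Real.pi : ℝ) * Gamma (m + 1 / 2)) := by
  have hG : Gamma (m + 1 / 2) ≠ 0 := Complex.Gamma_ne_zero_of_re_pos (by simp; linarith)
  have hpi : ((Real.sqrt Real.pi : ℝ) : ℂ) ≠ 0 := by
    exact_mod_cast (Real.sqrt_pos.2 Real.pi_pos).ne'
  rw [eq_div_iff (mul_ne_zero hpi hG), ← (aux_P_hasSum z hm).tsum_eq, zeroF1reg, ← tsum_mul_right]
  refine tsum_congr fun n => ?_
  have h1 := Complex.Gamma_mul_Gamma_eq_betaIntegral (s := (n:ℂ) + 1 / 2) (t := m + 1 / 2)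
    (by simp; positivity) (by simp; linarith)
  have h2 := aux_gamma_half n
  rw [show (n:ℂ) + 1 / 2 + (m + 1 / 2) = m + 1 + n by ring] at h1
  have hG2 : Gamma (m + 1 + n) ≠ 0 := Complex.Gamma_ne_zero_of_re_pos (by simp; positivity)
  have hf : (n.factorial : ℂ) ≠ 0 := by exact_mod_cast n.factorial_ne_zero
  have hf2 : ((2 * n).factorial : ℂ) ≠ 0 := by exact_mod_cast (2 * n).factorial_ne_zero
  have h4 : (4:ℂ) ^ n ≠ 0 := by simp
  have h5 : Complex.betaIntegral ((n:ℂ) + 1 / 2) (m + 1 / 2)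
      = Gamma ((n:ℂ) + 1 / 2) * Gamma (m + 1 / 2) / Gamma (m + 1 + n) := by
    rw [h1]; field_simp
  have h6 : Gamma ((n:ℂ) + 1 / 2) = ((2 * n).factorial : ℂ) * (Real.sqrt Real.pi : ℝ) /
      ((n.factorial : ℂ) * 4 ^ n) := by
    rw [eq_div_iff (mul_ne_zero hf h4), ← h2]; ring
  rw [h5, h6, div_pow, ← pow_mul]
  field_simp

lemma aux_cosh_norm (w : ℂ) : ‖Complex.cosh w‖ ≤ Real.exp |w.re| := by
  rw [Complex.cosh, norm_div]
  simp only [Complex.norm_ofNat]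
  have h1 := norm_add_le (cexp w) (cexp (-w))
  rw [Complex.norm_exp, Complex.norm_exp, Complex.neg_re] at h1
  have h2 : Real.exp w.re ≤ Real.exp |w.re| := Real.exp_le_exp.2 (le_abs_self _)
  have h3 : Real.exp (-w.re) ≤ Real.exp |w.re| := Real.exp_le_exp.2 (neg_le_abs _)
  linarith

lemma aux_P_norm {m z : ℂ} (hz : 0 < z.re) {u : ℝ} (hu : u ∈ Ioo (0:ℝ) 1) :
    ‖Complex.cosh (z * (Real.sqrt u : ℝ)) *
      ((u : ℂ) ^ ((1 / 2 : ℂ) - 1) * (1 - (u:ℂ)) ^ (m + 1 / 2 - 1))‖ ≤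
    Real.exp (z.re * Real.sqrt u) * (u ^ (-(1 / 2) : ℝ) * (1 - u) ^ (m.re - 1 / 2)) := by
  rw [norm_mul, aux_beta_norm _ hu]
  have h1 : 0 < 1 - u := by linarith [hu.2]
  have h0 := hu.1
  gcongr
  refine (aux_cosh_norm _).trans ?_
  rw [Complex.re_mul_ofReal, abs_of_nonneg (by positivity)]

lemma aux_P_bound1 {m z : ℂ} (hm : 0 < m.re) (hz : 0 < z.re) :
    ‖auxP m z‖ ≤ Real.exp z.re *
      ∫ u in Ioo (0:ℝ) 1, u ^ (-(1 / 2) : ℝ) * (1 - u) ^ (m.re - 1 / 2) := by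
  rw [← integral_const_mul]
  refine norm_integral_le_of_norm_le ((aux_beta_rint (by linarith)).const_mul _) ?_
  filter_upwards [self_mem_ae_restrict measurableSet_Ioo] with u hu
  refine (aux_P_norm hz hu).trans ?_
  have h1 : 0 < 1 - u := by linarith [hu.2]
  have h0 := hu.1
  have h2 : Real.sqrt u ≤ 1 := Real.sqrt_le_one.2 hu.2.le
  gcongr
  nlinarith

lemma aux_P_bound2 {m k : ℂ} (hm : 0 < m.re) (hk : 0 < k.re) {r : ℝ} (hr : 0 < r) :
    r ^ m.re * ‖auxP m (k * r)‖ ≤ Real.exp (k.re * r) * ((m.re / (k.re / 2)) ^ m.re *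
      ∫ u in Ioo (0:ℝ) 1, u ^ (-(1 / 2) : ℝ) * (1 - u) ^ ((0:ℝ) - 1 / 2)) := by
  have hz : 0 < (k * r).re := by simp; positivity
  rw [← integral_const_mul, ← integral_const_mul]
  have e : r ^ m.re * ‖auxP m (k * r)‖ = ‖((r ^ m.re : ℝ) : ℂ) * auxP m (k * r)‖ := by
    rw [norm_mul, Complex.norm_real, Real.norm_of_nonneg (by positivity)]
  rw [e, auxP, ← integral_const_mul]
  refine norm_integral_le_of_norm_le (((aux_beta_rint (by norm_num)).const_mul _).const_mul _) ?_
  filter_upwards [self_mem_ae_restrict measurableSet_Ioo] with u hu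
  have h1 : 0 < 1 - u := by linarith [hu.2]
  have h0 := hu.1
  rw [norm_mul, Complex.norm_real, Real.norm_of_nonneg (by positivity)]
  have h2 := aux_P_norm (m := m) hz hu
  have h3 := aux_pw (half_pos hk) hm (x := r * (1 - u)) (by positivity)
  rw [Real.mul_rpow hr.le h1.le] at h3
  have h4 : Real.sqrt u ≤ 1 - (1 - u) / 2 := by
    rw [Real.sqrt_le_iff]
    constructor
    · linarith
    · nlinarith [sq_nonneg (1 - u)]
  have h5 : Real.exp (k.re / 2 * (r * (1 - u))) * Real.exp ((k * r).re * Real.sqrt u)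
      ≤ Real.exp (k.re * r) := by
    rw [← Real.exp_add, Real.exp_le_exp, Complex.re_mul_ofReal]
    have := mul_le_mul_of_nonneg_left h4 (mul_pos hk hr).le
    nlinarith
  have h6 : (1 - u) ^ (m.re - 1 / 2) = (1 - u) ^ m.re * (1 - u) ^ ((0:ℝ) - 1 / 2) := by
    rw [← Real.rpow_add h1]; congr 1; ring
  rw [h6] at h2
  calc r ^ m.re * _ ≤ r ^ m.re * _ := mul_le_mul_of_nonneg_left h2 (by positivity)
    _ = (r ^ m.re * (1 - u) ^ m.re) * Real.exp ((k * r).re * Real.sqrt u) *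
        (u ^ (-(1 / 2) : ℝ) * (1 - u) ^ ((0:ℝ) - 1 / 2)) := by ring
    _ ≤ ((m.re / (k.re / 2)) ^ m.re * Real.exp (k.re / 2 * (r * (1 - u)))) *
        Real.exp ((k * r).re * Real.sqrt u) *
        (u ^ (-(1 / 2) : ℝ) * (1 - u) ^ ((0:ℝ) - 1 / 2)) := by gcongr
    _ = (m.re / (k.re / 2)) ^ m.re * (Real.exp (k.re / 2 * (r * (1 - u))) *
        Real.exp ((k * r).re * Real.sqrt u)) *
        (u ^ (-(1 / 2) : ℝ) * (1 - u) ^ ((0:ℝ) - 1 / 2)) := by ring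
    _ ≤ (m.re / (k.re / 2)) ^ m.re * Real.exp (k.re * r) *
        (u ^ (-(1 / 2) : ℝ) * (1 - u) ^ ((0:ℝ) - 1 / 2)) := by gcongr
    _ = _ := by ring

lemma aux_I_bound {m k : ℂ} (hmre : 0 < m.re) (hk : 0 < k.re) :
    ∃ C : ℝ, 0 ≤ C ∧ ∀ r : ℝ, 0 < r →
      ‖besselI2d m (k * r)‖ ≤ C * r ^ m.re * Real.exp (k.re * r) ∧
      ‖besselI2d m (k * r)‖ ≤ C * Real.exp (k.re * r) := by
  set B1 : ℝ := ∫ u in Ioo (0:ℝ) 1, u ^ (-(1 / 2) : ℝ) * (1 - u) ^ (m.re - 1 / 2)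
  set B2 : ℝ := (m.re / (k.re / 2)) ^ m.re *
      ∫ u in Ioo (0:ℝ) 1, u ^ (-(1 / 2) : ℝ) * (1 - u) ^ ((0:ℝ) - 1 / 2)
  set A : ℝ := ‖k / 2‖ ^ m.re / Real.exp ((k / 2).arg * m.im)
  set D : ℝ := ‖((Real.sqrt Real.pi : ℝ) : ℂ) * Gamma (m + 1 / 2)‖
  have hA : 0 ≤ A := by positivity
  have hI : ∀ r : ℝ, 0 < r → ‖besselI2d m (k * r)‖ ≤ A / D * (r ^ m.re * ‖auxP m (k * r)‖) := by
    intro r hr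
    rw [besselI2d, norm_mul, aux_F_formula _ hmre, norm_div]
    have h1 := Complex.norm_cpow_le (k * r / 2) m
    rw [show k * r / 2 = k / 2 * r by ring, Complex.arg_mul_real hr, norm_mul, Complex.norm_real,
      Real.norm_of_nonneg hr.le, Real.mul_rpow (norm_nonneg _) hr.le] at h1
    rw [show k * r / 2 = k / 2 * r by ring]
    calc _ ≤ (‖k / 2‖ ^ m.re * r ^ m.re / Real.exp ((k / 2).arg * m.im)) * (‖auxP m (k * r)‖ / D) := by
          gcongr
      _ = _ := by simp only [A]; ring
  have hAD : 0 ≤ A / D := by positivity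
  refine ⟨A / D * max (max B1 B2) 0, by positivity, fun r hr => ⟨?_, ?_⟩⟩
  · have hz : 0 < (k * r).re := by simp; positivity
    have h1 := aux_P_bound1 hmre hz
    rw [Complex.re_mul_ofReal] at h1
    refine (hI r hr).trans ?_
    calc A / D * (r ^ m.re * ‖auxP m (k * r)‖) ≤ A / D * (r ^ m.re * (Real.exp (k.re * r) * B1)) := by
          gcongr
      _ ≤ A / D * (r ^ m.re * (Real.exp (k.re * r) * max (max B1 B2) 0)) := by
          gcongr
          exact (le_max_left _ _).trans (le_max_left _ _)
      _ = _ := by ring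
  · have h1 := aux_P_bound2 hmre hk hr
    refine (hI r hr).trans ?_
    calc A / D * (r ^ m.re * ‖auxP m (k * r)‖) ≤ A / D * (Real.exp (k.re * r) * B2) := by
          gcongr
      _ ≤ A / D * (Real.exp (k.re * r) * max (max B1 B2) 0) := by
          gcongr
          exact (le_max_right _ _).trans (le_max_left _ _)
      _ = _ := by ring

lemma aux_kernel {m k : ℂ} (hm : ∀ n : ℤ, m ≠ n) (hmre : 0 < m.re) (hk : 0 < k.re) :
    ∃ C a : ℝ, 0 ≤ C ∧ 0 < a ∧ ∀ x y : ℝ,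
      ‖besselI2d m (k * Real.exp (min x y)) * besselK2d m (k * Real.exp (max x y))‖
        ≤ C * Real.exp (-a * |x - y|) := by
  obtain ⟨CI, hCI, hI⟩ := aux_I_bound (m := m) hmre hk
  obtain ⟨CK, hCK, hK⟩ := aux_K_bound hm hmre hk
  refine ⟨CI * CK * Real.exp k.re, min m.re k.re, by positivity, lt_min hmre hk, fun x y => ?_⟩
  have habs : |x - y| = max x y - min x y := (max_sub_min_eq_abs' x y).symm
  have hst : min x y ≤ max x y := min_le_max
  rw [habs, norm_mul]
  generalize min x y = s at *
  generalize max x y = t at *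
  have h1 := min_le_left m.re k.re
  have h2 := min_le_right m.re k.re
  rcases le_total s 0 with hs | hs
  · have i1 := (hI _ (Real.exp_pos s)).1
    have k1 := (hK _ (Real.exp_pos t)).1
    have e1 : Real.exp s ≤ 1 := Real.exp_le_one_iff.2 hs
    rw [← Real.exp_mul] at i1 k1
    calc _ ≤ (CI * Real.exp (s * m.re) * Real.exp (k.re * Real.exp s)) *
          (CK * Real.exp (t * -m.re)) := by gcongr
      _ ≤ (CI * Real.exp (s * m.re) * Real.exp (k.re * 1)) * (CK * Real.exp (t * -m.re)) := by gcongr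
      _ = CI * CK * Real.exp k.re * Real.exp (-m.re * (t - s)) := by
        rw [show -m.re * (t - s) = s * m.re + t * -m.re by ring, Real.exp_add, mul_one]; ring
      _ ≤ _ := by gcongr
  · have i1 := (hI _ (Real.exp_pos s)).2
    have k1 := (hK _ (Real.exp_pos t)).2 (Real.one_le_exp (hs.trans hst))
    have e1 : t - s ≤ Real.exp t - Real.exp s := by
      have a1 := Real.add_one_le_exp (t - s)
      have a2 : Real.exp t = Real.exp s * Real.exp (t - s) := by rw [← Real.exp_add]; ring_nf
      have a3 := Real.one_le_exp hs
      rw [a2]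
      nlinarith
    have e2 : 1 ≤ Real.exp k.re := Real.one_le_exp hk.le
    calc _ ≤ (CI * Real.exp (k.re * Real.exp s)) * (CK * Real.exp (-k.re * Real.exp t)) := by gcongr
      _ = CI * CK * 1 * Real.exp (-k.re * (Real.exp t - Real.exp s)) := by
        rw [show -k.re * (Real.exp t - Real.exp s) = k.re * Real.exp s + -k.re * Real.exp t by ring,
          Real.exp_add]; ring
      _ ≤ CI * CK * Real.exp k.re * Real.exp (-min m.re k.re * (t - s)) := by
        have e3 : -k.re * (Real.exp t - Real.exp s) ≤ -min m.re k.re * (t - s) := by nlinarith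
        exact mul_le_mul (mul_le_mul_of_nonneg_left e2 (by positivity)) (Real.exp_le_exp.2 e3)
          (by positivity) (by positivity)

lemma aux_exp_abs_int {a : ℝ} (ha : 0 < a) : Integrable (fun t : ℝ => Real.exp (-a * |t|)) := by
  rw [← integrableOn_univ, ← Iic_union_Ioi (a := (0:ℝ)), integrableOn_union]
  constructor
  · refine (integrableOn_exp_mul_Iic ha 0).congr_fun (fun t ht => ?_) measurableSet_Iic
    have ht : t ≤ 0 := ht
    simp only [abs_of_nonpos ht]
    ring_nf
  · refine (integrableOn_exp_mul_Ioi (neg_lt_zero.2 ha) 0).congr_fun (fun t ht => ?_) measurableSet_Ioi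
    have ht : 0 < t := ht
    simp only [abs_of_pos ht]

lemma aux_young {F G h : ℝ → ENNReal} (hF : Measurable F) (hG : Measurable G) (hh : Measurable h) :
    ∫⁻ x, ∫⁻ y, F x * h (x - y) * G y ≤
      (∫⁻ t, h t) * ((∫⁻ x, F x ^ (2:ℝ)) ^ (1 / 2 : ℝ) * (∫⁻ x, G x ^ (2:ℝ)) ^ (1 / 2 : ℝ)) := by
  have h1 : ∀ x, ∫⁻ y, F x * h (x - y) * G y = ∫⁻ t, F x * h t * G (x - t) := by
    intro x
    rw [← lintegral_sub_left_eq_self _ x]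
    simp
  simp only [h1]
  rw [lintegral_lintegral_swap (by apply Measurable.aemeasurable; fun_prop)]
  rw [← lintegral_mul_const _ hh]
  refine lintegral_mono fun t => ?_
  have h2 : ∫⁻ x, F x * h t * G (x - t) = h t * ∫⁻ x, F x * G (x - t) := by
    rw [← lintegral_const_mul _ (by fun_prop)]
    refine lintegral_congr fun x => ?_
    ring
  simp only [h2]
  gcongr
  have h3 := ENNReal.lintegral_mul_le_Lp_mul_Lq volume Real.HolderConjugate.two_two
    hF.aemeasurable (g := fun x => G (x - t)) (by apply Measurable.aemeasurable; fun_prop)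
  refine h3.trans (le_of_eq ?_)
  rw [lintegral_sub_right_eq_self (fun x => G x ^ (2:ℝ)) t]

lemma aux_young' {f g : ℝ → ℂ} {h : ℝ → ENNReal} (hf : MemLp f 2 volume) (hg : MemLp g 2 volume)
    (hh : Measurable h) :
    ∫⁻ x, ∫⁻ y, ‖f x‖ₑ * h (x - y) * ‖g y‖ₑ ≤ (∫⁻ t, h t) * (eLpNorm f 2 volume * eLpNorm g 2 volume) := by
  obtain ⟨f', hf', hff⟩ := hf.1
  obtain ⟨g', hg', hgg⟩ := hg.1
  rw [eLpNorm_congr_ae hff, eLpNorm_congr_ae hgg]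
  have e1 : ∫⁻ x, ∫⁻ y, ‖f x‖ₑ * h (x - y) * ‖g y‖ₑ = ∫⁻ x, ∫⁻ y, ‖f' x‖ₑ * h (x - y) * ‖g' y‖ₑ := by
    refine lintegral_congr_ae ?_
    filter_upwards [hff] with x hx
    refine lintegral_congr_ae ?_
    filter_upwards [hgg] with y hy
    rw [hx, hy]
  rw [e1, eLpNorm_eq_lintegral_rpow_enorm_toReal (by norm_num) (by norm_num),
    eLpNorm_eq_lintegral_rpow_enorm_toReal (by norm_num) (by norm_num)]
  exact aux_young hf'.measurable.enorm hg'.measurable.enorm hh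

/-- the resolvent kernel `R(x,y) = I_m(k e^{min(x,y)}) K_m(k e^{max(x,y)})`
of the Schrödinger operator with exponential potential defines a bounded integral operator
on `L²(ℝ)`, for `m ∉ ℤ`, `Re m > 0`, `Re k > 0`. -/
theorem exp_potential_resolvent_bounded (m k : ℂ) (hm : ∀ n : ℤ, m ≠ (n : ℂ))
    (hmre : 0 < m.re) (hk : 0 < k.re)
    (R : ℝ → ℝ → ℂ)
    (hR : ∀ x y : ℝ, R x y =
      besselI2d m (k * Real.exp (min x y)) * besselK2d m (k * Real.exp (max x y))) :
    ∃ C : ℝ, 0 ≤ C ∧ ∀ f g : ℝ → ℂ,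
      MemLp f 2 (volume : Measure ℝ) → MemLp g 2 (volume : Measure ℝ) →
      (∫ x : ℝ, ∫ y : ℝ, ‖f x‖ * ‖R x y‖ * ‖g y‖) ≤
        C * (eLpNorm f 2 (volume : Measure ℝ)).toReal *
          (eLpNorm g 2 (volume : Measure ℝ)).toReal := by
  obtain ⟨C, a, hC, ha, hb⟩ := aux_kernel hm hmre hk
  set h : ℝ → ENNReal := fun t => ENNReal.ofReal (C * Real.exp (-a * |t|)) with hh
  have hmeas : Measurable h := by
    rw [hh]; fun_prop
  have hfin : ∫⁻ t, h t ≠ ⊤ := ((aux_exp_abs_int ha).const_mul C).lintegral_lt_top.ne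
  refine ⟨(∫⁻ t, h t).toReal, ENNReal.toReal_nonneg, fun f g hf hg => ?_⟩
  have key : ‖∫ x : ℝ, ∫ y : ℝ, ‖f x‖ * ‖R x y‖ * ‖g y‖‖ₑ ≤
      (∫⁻ t, h t) * (eLpNorm f 2 volume * eLpNorm g 2 volume) := by
    refine (enorm_integral_le_lintegral_enorm _).trans ?_
    refine le_trans (lintegral_mono fun x => ?_) (aux_young' hf hg hmeas)
    refine (enorm_integral_le_lintegral_enorm _).trans ?_
    refine lintegral_mono fun y => ?_
    simp only [enorm_mul, enorm_norm]
    gcongr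
    rw [hR, ← ofReal_norm]
    exact ENNReal.ofReal_le_ofReal (hb x y)
  have htop : (∫⁻ t, h t) * (eLpNorm f 2 volume * eLpNorm g 2 volume) ≠ ⊤ :=
    ENNReal.mul_ne_top hfin (ENNReal.mul_ne_top hf.2.ne hg.2.ne)
  have := ENNReal.toReal_mono htop key
  rw [ENNReal.toReal_mul, ENNReal.toReal_mul, toReal_enorm, ← mul_assoc] at this
  exact (le_abs_self _).trans this
end
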